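/- For every z > 2, |P(W̄ ≤ z) − Φ(z)| ≤ 7115 · e^{−z/2} · (β₂ + β₃). -/

import Mathlib

open MeasureTheory ProbabilityTheory Real

/-- The standard normal cumulative distribution function. -/
noncomputable def Phi (z : ℝ) : ℝ :=
  (Real.sqrt (2 * Real.pi))⁻¹ * ∫ u in Set.Iic z, Real.exp (-u ^ 2 / 2)

/-- The bounded solution `f_z` of the Stein equation
`f'(w) - w f(w) = 1{w ≤ z} - Φ(z)`. -/
noncomputable def fz (z w : ℝ) : ℝ :=
  if w ≤ z then Real.sqrt (2 * Real.pi) * Real.exp (w ^ 2 / 2) * Phi w * (1 - Phi z)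
  else Real.sqrt (2 * Real.pi) * Real.exp (w ^ 2 / 2) * Phi z * (1 - Phi w)

/-- The derivative `f_z'`, expressed via the Stein equation. -/
noncomputable def fz' (z w : ℝ) : ℝ :=
  w * fz z w + (if w ≤ z then 1 else 0) - Phi z

/-- The truncation `x̄ᵢ = ξᵢ 1{ξᵢ ≤ 1}`. -/
noncomputable def xbar {Ω : Type*} {n : ℕ} (ξ : Fin n → Ω → ℝ) (i : Fin n) (ω : Ω) : ℝ :=
  if ξ i ω ≤ 1 then ξ i ω else 0

/-- `W̄ = ∑ᵢ x̄ᵢ`. -/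
noncomputable def Wbar {Ω : Type*} {n : ℕ} (ξ : Fin n → Ω → ℝ) (ω : Ω) : ℝ :=
  ∑ i, xbar ξ i ω

/-- `W̄⁽ⁱ⁾ = W̄ - x̄ᵢ`. -/
noncomputable def Wbari {Ω : Type*} {n : ℕ} (ξ : Fin n → Ω → ℝ) (i : Fin n) (ω : Ω) : ℝ :=
  Wbar ξ ω - xbar ξ i ω

/-- `K̄ᵢ(t) = E[x̄ᵢ (1{0 ≤ t ≤ x̄ᵢ} - 1{x̄ᵢ ≤ t < 0})]`. -/
noncomputable def Kbar {Ω : Type*} [MeasureSpace Ω] {n : ℕ} (ξ : Fin n → Ω → ℝ)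
    (i : Fin n) (t : ℝ) : ℝ :=
  ∫ ω, xbar ξ i ω * ((if 0 ≤ t ∧ t ≤ xbar ξ i ω then (1 : ℝ) else 0)
    - (if xbar ξ i ω ≤ t ∧ t < 0 then (1 : ℝ) else 0))

/-- `β₂ = ∑ᵢ E[ξᵢ² 1{|ξᵢ| > 1}]`. -/
noncomputable def beta2 {Ω : Type*} [MeasureSpace Ω] {n : ℕ} (ξ : Fin n → Ω → ℝ) : ℝ :=
  ∑ i, ∫ ω, (if 1 < |ξ i ω| then (ξ i ω) ^ 2 else 0)

/-- `β₃ = ∑ᵢ E[|ξᵢ|³ 1{|ξᵢ| ≤ 1}]`. -/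
noncomputable def beta3 {Ω : Type*} [MeasureSpace Ω] {n : ℕ} (ξ : Fin n → Ω → ℝ) : ℝ :=
  ∑ i, ∫ ω, (if |ξ i ω| ≤ 1 then |ξ i ω| ^ 3 else 0)

/-!
Stein's method. Averaging the Stein equation over `W̄` turns the error into
`E f_z'(W̄) - ∑ᵢ E[x̄ᵢ f_z(W̄)]`. Removing one summand at a time and using independence, each term
is controlled by how much `f_z'` changes between `W̄ - x̄ᵢ` and `W̄`. For `z ≥ 2` both `f_z` and
`f_z'` are at most a multiple of `e^{-z/2} (1 + e^w)`, and `E e^{W̄}` is bounded because the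
summands are at most one, so the smooth part of that change has the decay `e^{-z/2}`. The jump of
`f_z'` at `z` needs an exponentially weighted concentration inequality, `P(a ≤ W̄ - x̄ᵢ ≤ b)` being
of order `e^{-a/2} (b - a + δ)` with `δ = β₂ + β₃`, which is itself obtained by testing the sum
against a ramp function. When `δ` is not small, both tails are below `e^{-z/2}` and nothing is
left to prove.
-/

section MillsRatio

lemma hasDerivAt_exp_neg_sq_div_two (u : ℝ) :
    HasDerivAt (fun u ↦ exp (-u ^ 2 / 2)) (-u * exp (-u ^ 2 / 2)) u := by
  have h : HasDerivAt (fun u : ℝ ↦ -u ^ 2 / 2) (-u) u :=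
    ((hasDerivAt_pow 2 u).neg.div_const 2).congr_deriv (by norm_num; ring)
  exact h.exp.congr_deriv (mul_comm _ _)

lemma tendsto_exp_neg_sq_div_two_atTop :
    Filter.Tendsto (fun u : ℝ ↦ exp (-u ^ 2 / 2)) Filter.atTop (nhds 0) := by
  have h : Filter.Tendsto (fun u : ℝ ↦ u ^ 2 / 2) Filter.atTop Filter.atTop :=
    (Filter.tendsto_pow_atTop two_ne_zero).atTop_div_const two_pos
  simpa only [Function.comp_def, neg_div] using tendsto_exp_neg_atTop_nhds_zero.comp h

lemma integrable_exp_neg_sq_div_two : Integrable (fun u : ℝ ↦ exp (-u ^ 2 / 2)) := by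
  convert integrable_exp_neg_mul_sq (b := 1 / 2) (by norm_num) using 3
  ring

lemma integral_exp_neg_sq_div_two : ∫ u : ℝ, exp (-u ^ 2 / 2) = √(2 * π) := by
  convert integral_gaussian (1 / 2) using 4 <;> ring

lemma exp_sq_div_two_mul_exp_neg (x : ℝ) : exp (x ^ 2 / 2) * exp (-x ^ 2 / 2) = 1 := by
  rw [neg_div, ← exp_add, add_neg_cancel, exp_zero]

lemma sqrt_two_pi_pos : 0 < √(2 * π) := sqrt_pos.2 two_pi_pos

lemma one_sub_Phi_eq (z : ℝ) : 1 - Phi z = (√(2 * π))⁻¹ * ∫ u in Set.Ioi z, exp (-u ^ 2 / 2) := by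
  have h := intervalIntegral.integral_Iic_add_Ioi (b := z)
    integrable_exp_neg_sq_div_two.integrableOn integrable_exp_neg_sq_div_two.integrableOn
  rw [integral_exp_neg_sq_div_two, ← eq_sub_iff_add_eq'] at h
  rw [h, Phi, mul_sub, inv_mul_cancel₀ sqrt_two_pi_pos.ne']

lemma Phi_nonneg (z : ℝ) : 0 ≤ Phi z :=
  mul_nonneg (by positivity) (integral_nonneg fun _ ↦ (exp_pos _).le)

lemma Phi_le_one (z : ℝ) : Phi z ≤ 1 := by
  rw [← sub_nonneg, one_sub_Phi_eq]
  exact mul_nonneg (by positivity) (integral_nonneg fun _ ↦ (exp_pos _).le)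

lemma Phi_neg (x : ℝ) : Phi (-x) = 1 - Phi x := by
  rw [one_sub_Phi_eq, Phi, ← integral_comp_neg_Ioi]
  simp only [neg_sq]

lemma hasDerivAt_Phi (w : ℝ) : HasDerivAt Phi ((√(2 * π))⁻¹ * exp (-w ^ 2 / 2)) w := by
  have hcont : Continuous fun u : ℝ ↦ exp (-u ^ 2 / 2) := by fun_prop
  have hsplit (v : ℝ) : ∫ u in Set.Iic v, exp (-u ^ 2 / 2) =
      (∫ u in Set.Iic 0, exp (-u ^ 2 / 2)) + ∫ u in (0 : ℝ)..v, exp (-u ^ 2 / 2) := by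
    rw [← intervalIntegral.integral_Iic_sub_Iic integrable_exp_neg_sq_div_two.integrableOn
      integrable_exp_neg_sq_div_two.integrableOn]
    ring
  have hderiv := (intervalIntegral.integral_hasDerivAt_right (hcont.intervalIntegrable 0 w)
    hcont.aestronglyMeasurable.stronglyMeasurableAtFilter hcont.continuousAt).const_add
      (∫ u in Set.Iic 0, exp (-u ^ 2 / 2))
  simp only [← hsplit] at hderiv
  exact hderiv.const_mul _

lemma mul_integral_Ioi_exp_neg_sq_div_two_le {x : ℝ} (hx : 0 ≤ x) :
    x * ∫ u in Set.Ioi x, exp (-u ^ 2 / 2) ≤ exp (-x ^ 2 / 2) := by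
  have hderiv (u : ℝ) : HasDerivAt (fun u ↦ -exp (-u ^ 2 / 2)) (u * exp (-u ^ 2 / 2)) u :=
    (hasDerivAt_exp_neg_sq_div_two u).neg.congr_deriv (by ring)
  have hpos : ∀ u ∈ Set.Ioi x, 0 ≤ u * exp (-u ^ 2 / 2) := fun u hu ↦
    mul_nonneg (hx.trans (le_of_lt hu)) (exp_pos _).le
  have htendsto := tendsto_exp_neg_sq_div_two_atTop.neg
  calc x * ∫ u in Set.Ioi x, exp (-u ^ 2 / 2)
      = ∫ u in Set.Ioi x, x * exp (-u ^ 2 / 2) := (integral_const_mul _ _).symm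
    _ ≤ ∫ u in Set.Ioi x, u * exp (-u ^ 2 / 2) :=
        setIntegral_mono_on (integrable_exp_neg_sq_div_two.integrableOn.const_mul x)
          (integrableOn_Ioi_deriv_of_nonneg' (fun u _ ↦ hderiv u) hpos htendsto) measurableSet_Ioi
          fun u hu ↦ mul_le_mul_of_nonneg_right (le_of_lt hu) (exp_pos _).le
    _ = exp (-x ^ 2 / 2) := by
        rw [integral_Ioi_of_hasDerivAt_of_nonneg' (fun u _ ↦ hderiv u) hpos htendsto]
        ring

lemma hasDerivAt_neg_exp_neg_sq_div_two_div {u : ℝ} (hu : u ≠ 0) :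
    HasDerivAt (fun u ↦ -(exp (-u ^ 2 / 2) / u)) ((1 + (u ^ 2)⁻¹) * exp (-u ^ 2 / 2)) u := by
  refine ((hasDerivAt_exp_neg_sq_div_two u).div (hasDerivAt_id' u) hu).neg.congr_deriv ?_
  field_simp
  ring

lemma exp_neg_sq_div_two_div_le {x : ℝ} (hx : 0 < x) :
    exp (-x ^ 2 / 2) / x ≤ (1 + (x ^ 2)⁻¹) * ∫ u in Set.Ioi x, exp (-u ^ 2 / 2) := by
  have hderiv : ∀ u ∈ Set.Ici x, HasDerivAt (fun u ↦ -(exp (-u ^ 2 / 2) / u))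
      ((1 + (u ^ 2)⁻¹) * exp (-u ^ 2 / 2)) u := fun u hu ↦
    hasDerivAt_neg_exp_neg_sq_div_two_div (hx.trans_le hu).ne'
  have hpos : ∀ u ∈ Set.Ioi x, 0 ≤ (1 + (u ^ 2)⁻¹) * exp (-u ^ 2 / 2) := fun u _ ↦ by positivity
  have htendsto : Filter.Tendsto (fun u : ℝ ↦ -(exp (-u ^ 2 / 2) / u)) Filter.atTop (nhds 0) := by
    simpa [div_eq_mul_inv] using
      (tendsto_exp_neg_sq_div_two_atTop.mul tendsto_inv_atTop_zero).neg
  calc exp (-x ^ 2 / 2) / x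
      = ∫ u in Set.Ioi x, (1 + (u ^ 2)⁻¹) * exp (-u ^ 2 / 2) := by
        rw [integral_Ioi_of_hasDerivAt_of_nonneg' hderiv hpos htendsto]
        ring
    _ ≤ ∫ u in Set.Ioi x, (1 + (x ^ 2)⁻¹) * exp (-u ^ 2 / 2) := by
        refine setIntegral_mono_on (integrableOn_Ioi_deriv_of_nonneg' hderiv hpos htendsto)
          (integrable_exp_neg_sq_div_two.integrableOn.const_mul _) measurableSet_Ioi fun u hu ↦ ?_
        have hxu : x ≤ u := le_of_lt hu
        gcongr
    _ = _ := integral_const_mul _ _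

/-- The Mills ratio `(1 - Φ(x)) / φ(x)` of the standard normal law. Both branches of the Stein
solution `fz z` are multiples of it. -/
noncomputable def millsRatio (x : ℝ) : ℝ := √(2 * π) * exp (x ^ 2 / 2) * (1 - Phi x)

lemma millsRatio_eq_integral (x : ℝ) :
    millsRatio x = exp (x ^ 2 / 2) * ∫ u in Set.Ioi x, exp (-u ^ 2 / 2) := by
  have := sqrt_two_pi_pos.ne'
  rw [millsRatio, one_sub_Phi_eq]
  field_simp

lemma millsRatio_nonneg (x : ℝ) : 0 ≤ millsRatio x :=
  mul_nonneg (by positivity) (sub_nonneg.2 (Phi_le_one x))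

lemma millsRatio_le_sqrt_two_pi_mul_exp (x : ℝ) : millsRatio x ≤ √(2 * π) * exp (x ^ 2 / 2) :=
  mul_le_of_le_one_right (by positivity) (by linarith [Phi_nonneg x])

lemma mul_millsRatio_le_one (x : ℝ) : x * millsRatio x ≤ 1 := by
  rcases le_total x 0 with hx | hx
  · linarith [mul_nonpos_of_nonpos_of_nonneg hx (millsRatio_nonneg x)]
  calc x * millsRatio x
      = exp (x ^ 2 / 2) * (x * ∫ u in Set.Ioi x, exp (-u ^ 2 / 2)) := by
        rw [millsRatio_eq_integral]; ring
    _ ≤ exp (x ^ 2 / 2) * exp (-x ^ 2 / 2) := by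
        gcongr; exact mul_integral_Ioi_exp_neg_sq_div_two_le hx
    _ = 1 := exp_sq_div_two_mul_exp_neg x

lemma le_one_add_sq_mul_millsRatio (x : ℝ) : x ≤ (1 + x ^ 2) * millsRatio x := by
  rcases le_or_gt x 0 with hx | hx
  · exact hx.trans (mul_nonneg (by positivity) (millsRatio_nonneg x))
  calc x = x * (exp (x ^ 2 / 2) * exp (-x ^ 2 / 2)) := by
        rw [exp_sq_div_two_mul_exp_neg, mul_one]
    _ = x ^ 2 * exp (x ^ 2 / 2) * (exp (-x ^ 2 / 2) / x) := by field_simp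
    _ ≤ x ^ 2 * exp (x ^ 2 / 2) * ((1 + (x ^ 2)⁻¹) * ∫ u in Set.Ioi x, exp (-u ^ 2 / 2)) := by
        gcongr; exact exp_neg_sq_div_two_div_le hx
    _ = (1 + x ^ 2) * millsRatio x := by
        rw [millsRatio_eq_integral]; field_simp; ring

lemma hasDerivAt_millsRatio (x : ℝ) : HasDerivAt millsRatio (x * millsRatio x - 1) x := by
  have hsq : HasDerivAt (fun u : ℝ ↦ u ^ 2 / 2) x x :=
    ((hasDerivAt_pow 2 x).div_const 2).congr_deriv (by simp)
  refine ((hsq.exp.const_mul √(2 * π)).mul ((hasDerivAt_Phi x).const_sub 1)).congr_deriv ?_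
  have hsqrt := mul_inv_cancel₀ sqrt_two_pi_pos.ne'
  rw [millsRatio]
  linear_combination (-√(2 * π) * (√(2 * π))⁻¹) * exp_sq_div_two_mul_exp_neg x - hsqrt

lemma continuous_millsRatio : Continuous millsRatio :=
  continuous_iff_continuousAt.2 fun x ↦ (hasDerivAt_millsRatio x).continuousAt

lemma antitone_millsRatio : Antitone millsRatio :=
  antitone_of_hasDerivAt_nonpos hasDerivAt_millsRatio fun x ↦
    sub_nonpos.2 (mul_millsRatio_le_one x)

lemma millsRatio_le_two {x : ℝ} (hx : 0 ≤ x) : millsRatio x ≤ 2 := by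
  have hPhi : Phi 0 = 1 - Phi 0 := by simpa using Phi_neg 0
  have hsqrt : √(2 * π) ≤ 4 := (sqrt_le_left (by norm_num)).2 (by linarith [pi_le_four])
  calc millsRatio x ≤ millsRatio 0 := antitone_millsRatio hx
    _ = √(2 * π) * (1 - Phi 0) := by simp [millsRatio]
    _ ≤ 2 := by rw [show Phi 0 = 1 / 2 by linarith]; linarith

lemma one_sub_Phi_mul_le_exp {z : ℝ} (hz : 0 ≤ z) :
    z * (√(2 * π) * (1 - Phi z)) ≤ exp (-z ^ 2 / 2) := by
  rw [one_sub_Phi_eq, mul_inv_cancel_left₀ sqrt_two_pi_pos.ne']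
  exact mul_integral_Ioi_exp_neg_sq_div_two_le hz

end MillsRatio

section SteinSolution

lemma fz_of_le {z w : ℝ} (h : w ≤ z) : fz z w = (1 - Phi z) * millsRatio (-w) := by
  rw [fz, if_pos h, millsRatio, Phi_neg, neg_sq]
  ring

lemma fz_of_ge {z w : ℝ} (h : z ≤ w) : fz z w = Phi z * millsRatio w := by
  rcases h.eq_or_lt with rfl | h
  · rw [fz, if_pos le_rfl, millsRatio]
    ring
  · rw [fz, if_neg h.not_ge, millsRatio]
    ring

/-- Common bound for the Stein solution `fz z`, for its derivative and for the derivative of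
`w ↦ w * fz z w`. It decays in the level `z` and is exponentially integrable in `w`. -/
noncomputable def steinEnvelope (z w : ℝ) : ℝ := 4 * exp (-z / 2) * (1 + exp w)

lemma steinEnvelope_nonneg (z w : ℝ) : 0 ≤ steinEnvelope z w := by
  unfold steinEnvelope
  positivity

lemma steinEnvelope_mono (z : ℝ) : Monotone (steinEnvelope z) := fun a b h ↦ by
  unfold steinEnvelope
  gcongr

lemma continuous_steinEnvelope (z : ℝ) : Continuous (steinEnvelope z) := by
  unfold steinEnvelope
  fun_prop

lemma le_exp_half (x : ℝ) : x ≤ exp (x / 2) := by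
  have hexp : exp (x / 4) ^ 2 = exp (x / 2) := by rw [← exp_nat_mul]; ring_nf
  nlinarith [add_one_le_exp (x / 4), exp_pos (x / 4), sq_nonneg (exp (x / 4) - 2)]

lemma mul_exp_neg_half_le_one (x : ℝ) : x * exp (-x / 2) ≤ 1 := by
  rw [neg_div, exp_neg, ← div_eq_mul_inv]
  exact div_le_one_of_le₀ (le_exp_half x) (exp_pos _).le

lemma exp_neg_eq_exp_neg_half_mul_self (z : ℝ) : exp (-z) = exp (-z / 2) * exp (-z / 2) := by
  rw [← exp_add, add_halves]

lemma one_sub_Phi_le_exp_neg_div_two {z : ℝ} (hz : 2 ≤ z) : 1 - Phi z ≤ exp (-z) / 2 := by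
  have htail := one_sub_Phi_mul_le_exp (zero_le_two.trans hz)
  have hexp : exp (-z ^ 2 / 2) ≤ exp (-z) := exp_le_exp.2 (by nlinarith)
  have hsqrt : 1 ≤ √(2 * π) := one_le_sqrt.2 (by linarith [pi_gt_three])
  have hPhi : 0 ≤ 1 - Phi z := sub_nonneg.2 (Phi_le_one z)
  nlinarith [le_mul_of_one_le_left hPhi hsqrt]

lemma Phi_mul_le_steinEnvelope {z w y : ℝ} (hz : 0 ≤ z) (hzw : z ≤ w) (hy : y ≤ 2) :
    Phi z * y ≤ steinEnvelope z w := by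
  have hexp : 1 ≤ exp (-z / 2) * exp w := by
    rw [← exp_add]
    exact one_le_exp (by linarith)
  unfold steinEnvelope
  nlinarith [Phi_nonneg z, Phi_le_one z, exp_pos (-z / 2)]

lemma one_sub_Phi_mul_le_steinEnvelope {z w y : ℝ} (hz : 2 ≤ z) (hy : y ≤ 2) :
    (1 - Phi z) * y ≤ steinEnvelope z w := by
  have hexp : exp (-z) ≤ exp (-z / 2) := exp_le_exp.2 (by linarith)
  calc (1 - Phi z) * y ≤ (1 - Phi z) * 2 := by
        gcongr
        exact sub_nonneg.2 (Phi_le_one z)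
    _ ≤ exp (-z / 2) * 1 := by linarith [one_sub_Phi_le_exp_neg_div_two hz]
    _ ≤ 4 * exp (-z / 2) * (1 + exp w) := by
        gcongr <;> linarith [exp_pos (-z / 2), exp_pos w]

lemma mul_one_sub_Phi_mul_millsRatio_neg_le {z w : ℝ} (hz : 2 ≤ z) (hw : 0 ≤ w) (hwz : w ≤ z) :
    z * ((1 - Phi z) * millsRatio (-w)) ≤ exp (w - z) := by
  have hz0 : 0 ≤ z := zero_le_two.trans hz
  have hPhi : 0 ≤ 1 - Phi z := sub_nonneg.2 (Phi_le_one z)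
  calc z * ((1 - Phi z) * millsRatio (-w))
      ≤ z * ((1 - Phi z) * (√(2 * π) * exp ((-w) ^ 2 / 2))) := by
        gcongr; exact millsRatio_le_sqrt_two_pi_mul_exp _
    _ = z * (√(2 * π) * (1 - Phi z)) * exp (w ^ 2 / 2) := by rw [neg_sq]; ring
    _ ≤ exp (-z ^ 2 / 2) * exp (w ^ 2 / 2) := by
        gcongr; exact one_sub_Phi_mul_le_exp hz0
    _ ≤ exp (w - z) := by
        rw [← exp_add]
        exact exp_le_exp.2 (by nlinarith)

lemma one_sub_Phi_mul_add_le_steinEnvelope {z w : ℝ} (hz : 2 ≤ z) (hw : 0 ≤ w) (hwz : w ≤ z) :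
    (1 - Phi z) * ((1 + z ^ 2) * millsRatio (-w) + z) ≤ steinEnvelope z w := by
  have hPhi : 0 ≤ 1 - Phi z := sub_nonneg.2 (Phi_le_one z)
  have : 0 ≤ z := zero_le_two.trans hz
  have hmills : (1 - Phi z) * ((1 + z ^ 2) * millsRatio (-w)) ≤ 2 * exp (-z / 2) * exp w := by
    calc (1 - Phi z) * ((1 + z ^ 2) * millsRatio (-w))
        ≤ (1 - Phi z) * ((2 * z ^ 2) * millsRatio (-w)) := by
          gcongr
          · exact millsRatio_nonneg _
          · nlinarith
      _ = 2 * z * (z * ((1 - Phi z) * millsRatio (-w))) := by ring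
      _ ≤ 2 * z * exp (w - z) := by
          gcongr; exact mul_one_sub_Phi_mul_millsRatio_neg_le hz hw hwz
      _ = 2 * exp (-z / 2) * exp w * (z * exp (-z / 2)) := by
          rw [sub_eq_add_neg, exp_add, exp_neg_eq_exp_neg_half_mul_self]; ring
      _ ≤ 2 * exp (-z / 2) * exp w :=
          mul_le_of_le_one_right (by positivity) (mul_exp_neg_half_le_one z)
  have htail : (1 - Phi z) * z ≤ exp (-z / 2) := by
    calc (1 - Phi z) * z ≤ exp (-z) / 2 * z := by
          gcongr; exact one_sub_Phi_le_exp_neg_div_two hz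
      _ = exp (-z / 2) * (z * exp (-z / 2)) / 2 := by
          rw [exp_neg_eq_exp_neg_half_mul_self]; ring
      _ ≤ exp (-z / 2) * 1 := by
          linarith [exp_pos (-z / 2),
            mul_le_mul_of_nonneg_left (mul_exp_neg_half_le_one z) (exp_pos (-z / 2)).le]
      _ = exp (-z / 2) := mul_one _
  have hexp : 0 < exp (-z / 2) * exp w := by positivity
  rw [steinEnvelope, mul_add]
  linarith [exp_pos (-z / 2)]

lemma abs_fz_le {z : ℝ} (hz : 2 ≤ z) (w : ℝ) : |fz z w| ≤ steinEnvelope z w := by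
  have hPhi : 0 ≤ 1 - Phi z := sub_nonneg.2 (Phi_le_one z)
  rcases le_total z w with hzw | hwz
  · rw [fz_of_ge hzw, abs_of_nonneg (mul_nonneg (Phi_nonneg z) (millsRatio_nonneg w))]
    exact Phi_mul_le_steinEnvelope (by linarith) hzw (millsRatio_le_two (by linarith))
  rw [fz_of_le hwz, abs_of_nonneg (mul_nonneg hPhi (millsRatio_nonneg _))]
  rcases le_total w 0 with hw | hw
  · exact one_sub_Phi_mul_le_steinEnvelope hz (millsRatio_le_two (by linarith))
  refine le_trans ?_ (one_sub_Phi_mul_add_le_steinEnvelope hz hw hwz)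
  gcongr
  nlinarith [mul_nonneg (sq_nonneg z) (millsRatio_nonneg (-w))]

lemma abs_mul_fz_add_one_sub_Phi_le {z w : ℝ} (hz : 2 ≤ z) (hwz : w ≤ z) :
    |w * fz z w + 1 - Phi z| ≤ steinEnvelope z w := by
  have hPhi : 0 ≤ 1 - Phi z := sub_nonneg.2 (Phi_le_one z)
  have hmills := mul_millsRatio_le_one (-w)
  have heq : w * fz z w + 1 - Phi z = (1 - Phi z) * (1 - -w * millsRatio (-w)) := by
    rw [fz_of_le hwz]; ring
  rw [heq, abs_of_nonneg (mul_nonneg hPhi (sub_nonneg.2 hmills))]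
  rcases le_total w 0 with hw | hw
  · refine one_sub_Phi_mul_le_steinEnvelope hz ?_
    linarith [mul_nonneg (neg_nonneg.2 hw) (millsRatio_nonneg (-w))]
  refine le_trans ?_ (one_sub_Phi_mul_add_le_steinEnvelope hz hw hwz)
  gcongr
  have hsq : w ≤ 1 + z ^ 2 := by nlinarith
  linarith [mul_le_mul_of_nonneg_right hsq (millsRatio_nonneg (-w))]

lemma abs_mul_fz_sub_Phi_le {z w : ℝ} (hz : 0 ≤ z) (hzw : z ≤ w) :
    |w * fz z w - Phi z| ≤ steinEnvelope z w := by
  have heq : w * fz z w - Phi z = -(Phi z * (1 - w * millsRatio w)) := by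
    rw [fz_of_ge hzw]; ring
  rw [heq, abs_neg,
    abs_of_nonneg (mul_nonneg (Phi_nonneg z) (sub_nonneg.2 (mul_millsRatio_le_one w)))]
  refine Phi_mul_le_steinEnvelope hz hzw ?_
  linarith [mul_nonneg (hz.trans hzw) (millsRatio_nonneg w)]

lemma one_add_sq_mul_millsRatio_sub_le_two {x : ℝ} (hx : 0 ≤ x) :
    (1 + x ^ 2) * millsRatio x - x ≤ 2 := by
  nlinarith [millsRatio_le_two hx, mul_le_mul_of_nonneg_left (mul_millsRatio_le_one x) hx]

/-- The right derivative of the Stein solution `fz z`; it differs from `fz' z` only at `z`. -/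
noncomputable def fzRightDeriv (z w : ℝ) : ℝ :=
  w * fz z w + (if w < z then 1 else 0) - Phi z

lemma abs_fz_add_mul_fzRightDeriv_le {z : ℝ} (hz : 2 ≤ z) (w : ℝ) :
    |fz z w + w * fzRightDeriv z w| ≤ steinEnvelope z w := by
  have hPhi : 0 ≤ 1 - Phi z := sub_nonneg.2 (Phi_le_one z)
  rcases le_or_gt z w with hzw | hwz
  · have heq : fz z w + w * fzRightDeriv z w = Phi z * ((1 + w ^ 2) * millsRatio w - w) := by
      rw [fzRightDeriv, if_neg hzw.not_gt, fz_of_ge hzw]; ring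
    rw [heq, abs_of_nonneg
      (mul_nonneg (Phi_nonneg z) (sub_nonneg.2 (le_one_add_sq_mul_millsRatio w)))]
    exact Phi_mul_le_steinEnvelope (by linarith) hzw
      (one_add_sq_mul_millsRatio_sub_le_two (by linarith))
  have heq : fz z w + w * fzRightDeriv z w =
      (1 - Phi z) * ((1 + (-w) ^ 2) * millsRatio (-w) - -w) := by
    rw [fzRightDeriv, if_pos hwz, fz_of_le hwz.le]; ring
  rw [heq, abs_of_nonneg (mul_nonneg hPhi (sub_nonneg.2 (le_one_add_sq_mul_millsRatio (-w))))]
  rcases le_total w 0 with hw | hw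
  · exact one_sub_Phi_mul_le_steinEnvelope hz
      (one_add_sq_mul_millsRatio_sub_le_two (neg_nonneg.2 hw))
  refine le_trans ?_ (one_sub_Phi_mul_add_le_steinEnvelope hz hw hwz.le)
  rw [neg_sq, sub_neg_eq_add]
  gcongr
  exact millsRatio_nonneg _

lemma continuous_fz (z : ℝ) : Continuous (fz z) := by
  have hm := continuous_millsRatio
  have hfz : fz z = fun w ↦ if w ≤ z then (1 - Phi z) * millsRatio (-w)
      else Phi z * millsRatio w := by
    ext w
    split_ifs with h
    exacts [fz_of_le h, fz_of_ge (le_of_not_ge h)]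
  rw [hfz]
  refine Continuous.if_le (by fun_prop) (by fun_prop) continuous_id continuous_const ?_
  rintro w rfl
  rw [← fz_of_le le_rfl, ← fz_of_ge le_rfl]

lemma hasDerivWithinAt_fz (z w : ℝ) :
    HasDerivWithinAt (fz z) (fzRightDeriv z w) (Set.Ici w) w := by
  rcases lt_or_ge w z with h | h
  · have hleft : HasDerivAt (fun w ↦ (1 - Phi z) * millsRatio (-w)) (fzRightDeriv z w) w := by
      refine (((hasDerivAt_millsRatio (-w)).comp w
        (hasDerivAt_neg w)).const_mul (1 - Phi z)).congr_deriv ?_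
      rw [fzRightDeriv, if_pos h, fz_of_le h.le]
      ring
    refine (hleft.congr_of_eventuallyEq ?_).hasDerivWithinAt
    filter_upwards [Iio_mem_nhds h] with u hu using fz_of_le (le_of_lt hu)
  · have hright : HasDerivAt (fun w ↦ Phi z * millsRatio w) (fzRightDeriv z w) w := by
      refine ((hasDerivAt_millsRatio w).const_mul (Phi z)).congr_deriv ?_
      rw [fzRightDeriv, if_neg h.not_gt, fz_of_ge h]
      ring
    exact hright.hasDerivWithinAt.congr (fun u hu ↦ fz_of_ge (h.trans hu)) (fz_of_ge h)

lemma abs_mul_fz_sub_mul_fz_le {z : ℝ} (hz : 2 ≤ z) (a b : ℝ) :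
    |b * fz z b - a * fz z a| ≤ steinEnvelope z (max a b) * |b - a| := by
  wlog hab : a ≤ b generalizing a b
  · rw [abs_sub_comm, max_comm, abs_sub_comm b]
    exact this b a (le_of_not_ge hab)
  rw [max_eq_right hab, abs_of_nonneg (sub_nonneg.2 hab)]
  refine norm_image_sub_le_of_norm_deriv_right_le_segment (f := fun u ↦ u * fz z u)
    (continuous_id.mul (continuous_fz z)).continuousOn (fun u _ ↦ ?_)
    (fun u hu ↦ (abs_fz_add_mul_fzRightDeriv_le hz u).trans (steinEnvelope_mono z hu.2.le)) b
    ⟨hab, le_rfl⟩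
  exact ((hasDerivWithinAt_id u (Set.Ici u)).mul (hasDerivWithinAt_fz z u)).congr_deriv (by simp)

lemma abs_fz_sub_fz_sub_mul_le {z c C a b : ℝ}
    (hC : ∀ u ∈ Set.uIcc a b, |fzRightDeriv z u - c| ≤ C) :
    |fz z b - fz z a - (b - a) * c| ≤ |b - a| * C := by
  wlog hab : a ≤ b generalizing a b
  · convert this (a := b) (b := a) (by rwa [Set.uIcc_comm]) (le_of_not_ge hab) using 1
    · rw [← abs_neg]; ring_nf
    · rw [abs_sub_comm]
  rw [abs_of_nonneg (sub_nonneg.2 hab), mul_comm _ C]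
  rw [Set.uIcc_of_le hab] at hC
  have hderiv (u : ℝ) :
      HasDerivWithinAt (fun u ↦ fz z u - u * c) (fzRightDeriv z u - c) (Set.Ici u) u :=
    ((hasDerivWithinAt_fz z u).sub
      ((hasDerivWithinAt_id u (Set.Ici u)).mul_const c)).congr_deriv (by simp)
  have hmvt := norm_image_sub_le_of_norm_deriv_right_le_segment
    ((continuous_fz z).sub (continuous_id.mul continuous_const)).continuousOn
    (fun u _ ↦ hderiv u) (fun u hu ↦ hC u (Set.Ico_subset_Icc_self hu)) b ⟨hab, le_rfl⟩
  convert hmvt using 2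
  simp only [Pi.sub_apply, Pi.mul_apply, id, norm_eq_abs]
  ring_nf

/-- Bound for the variation of `fz' z` on the segment from `w` to `w + x`: a Lipschitz part plus
the jump of `fz' z` at `z`, which counts only if `w` is within `min |x| 1` of `z`. -/
noncomputable def steinIncrement (z x w : ℝ) : ℝ :=
  2 * min |x| 1 * steinEnvelope z (w + 1) +
    (Set.Icc (z - min |x| 1) (z + min |x| 1)).indicator 1 w

lemma abs_mul_fz_add_sub_Phi_le {z u i : ℝ} (hz : 2 ≤ z) (hi : i = 1 ∧ u ≤ z ∨ i = 0 ∧ z ≤ u) :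
    |u * fz z u + i - Phi z| ≤ steinEnvelope z u := by
  rcases hi with ⟨rfl, hu⟩ | ⟨rfl, hu⟩
  · exact abs_mul_fz_add_one_sub_Phi_le hz hu
  · simpa using abs_mul_fz_sub_Phi_le (by linarith) hu

lemma indicator_le_eq_one_or_eq_zero (z w : ℝ) :
    (if w ≤ z then 1 else 0 : ℝ) = 1 ∧ w ≤ z ∨ (if w ≤ z then 1 else 0 : ℝ) = 0 ∧ z ≤ w := by
  split_ifs with h
  exacts [.inl ⟨rfl, h⟩, .inr ⟨rfl, le_of_not_ge h⟩]

lemma indicator_lt_eq_one_or_eq_zero (z w : ℝ) :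
    (if w < z then 1 else 0 : ℝ) = 1 ∧ w ≤ z ∨ (if w < z then 1 else 0 : ℝ) = 0 ∧ z ≤ w := by
  split_ifs with h
  exacts [.inl ⟨rfl, h.le⟩, .inr ⟨rfl, le_of_not_gt h⟩]

lemma abs_fz'_le {z : ℝ} (hz : 2 ≤ z) (w : ℝ) : |fz' z w| ≤ steinEnvelope z w :=
  abs_mul_fz_add_sub_Phi_le hz (indicator_le_eq_one_or_eq_zero z w)

lemma abs_sub_le_indicator_Icc {z w u r i j : ℝ} (hi : i = 1 ∧ u ≤ z ∨ i = 0 ∧ z ≤ u)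
    (hj : j = 1 ∧ w ≤ z ∨ j = 0 ∧ z ≤ w) (hur : |u - w| ≤ r) :
    |i - j| ≤ (Set.Icc (z - r) (z + r)).indicator 1 w := by
  have hnonneg : (0 : ℝ) ≤ (Set.Icc (z - r) (z + r)).indicator 1 w :=
    Set.indicator_nonneg (fun _ _ ↦ zero_le_one) w
  rw [abs_le] at hur
  rcases hi with ⟨rfl, hu⟩ | ⟨rfl, hu⟩ <;> rcases hj with ⟨rfl, hw⟩ | ⟨rfl, hw⟩
  · simpa using hnonneg
  · have hmem : w ∈ Set.Icc (z - r) (z + r) := ⟨by linarith, by linarith⟩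
    simp [hmem]
  · have hmem : w ∈ Set.Icc (z - r) (z + r) := ⟨by linarith, by linarith⟩
    simp [hmem]
  · simpa using hnonneg

lemma abs_mul_fz_add_sub_Phi_sub_fz'_le {z x w u i : ℝ} (hz : 2 ≤ z)
    (hi : i = 1 ∧ u ≤ z ∨ i = 0 ∧ z ≤ u) (huw : u ≤ w + 1) (hux : |u - w| ≤ |x|) :
    |u * fz z u + i - Phi z - fz' z w| ≤ steinIncrement z x w := by
  have henv := steinEnvelope_nonneg z (w + 1)
  have hjump : (0 : ℝ) ≤ (Set.Icc (z - min |x| 1) (z + min |x| 1)).indicator 1 w :=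
    Set.indicator_nonneg (fun _ _ ↦ zero_le_one) w
  rw [steinIncrement]
  rcases le_total |x| 1 with hx | hx
  · rw [min_eq_left hx] at *
    have hmax : steinEnvelope z (max w u) ≤ steinEnvelope z (w + 1) :=
      steinEnvelope_mono z (max_le (by linarith) huw)
    calc |u * fz z u + i - Phi z - fz' z w|
        = |(u * fz z u - w * fz z w) + (i - if w ≤ z then 1 else 0)| := by
          rw [fz']; congr 1; ring
      _ ≤ |u * fz z u - w * fz z w| + |i - if w ≤ z then 1 else 0| := abs_add_le _ _
      _ ≤ steinEnvelope z (w + 1) * |x| + (Set.Icc (z - |x|) (z + |x|)).indicator 1 w := by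
          gcongr
          · exact (abs_mul_fz_sub_mul_fz_le hz w u).trans (by gcongr)
          · exact abs_sub_le_indicator_Icc hi (indicator_le_eq_one_or_eq_zero z w) hux
      _ ≤ _ := by nlinarith [mul_nonneg (abs_nonneg x) henv]
  · have hu := (abs_mul_fz_add_sub_Phi_le hz hi).trans (steinEnvelope_mono z huw)
    have hw := (abs_fz'_le hz w).trans (steinEnvelope_mono z (by linarith : w ≤ w + 1))
    rw [min_eq_right hx] at *
    linarith [abs_sub (u * fz z u + i - Phi z) (fz' z w)]

lemma abs_fz'_add_sub_fz'_le {z x : ℝ} (hz : 2 ≤ z) (hx : x ≤ 1) (w : ℝ) :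
    |fz' z (w + x) - fz' z w| ≤ steinIncrement z x w :=
  abs_mul_fz_add_sub_Phi_sub_fz'_le hz (indicator_le_eq_one_or_eq_zero z _) (by linarith) (by simp)

lemma abs_fz_add_sub_fz_sub_mul_fz'_le {z x : ℝ} (hz : 2 ≤ z) (hx : x ≤ 1) (w : ℝ) :
    |fz z (w + x) - fz z w - x * fz' z w| ≤ |x| * steinIncrement z x w := by
  have hsegment : ∀ u ∈ Set.uIcc w (w + x), |fzRightDeriv z u - fz' z w| ≤ steinIncrement z x w :=
    fun u hu ↦ abs_mul_fz_add_sub_Phi_sub_fz'_le hz (indicator_lt_eq_one_or_eq_zero z u)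
      (hu.2.trans (max_le (by linarith) (by linarith)))
      (by simpa using Set.abs_sub_left_of_mem_uIcc hu)
  simpa using abs_fz_sub_fz_sub_mul_le hsegment

end SteinSolution

section TruncatedThirdMoment

variable {Ω : Type*} [MeasurableSpace Ω] {μ : Measure Ω} {Y : Ω → ℝ}

/-- The truncated third moment `E[Y² min(|Y|, 1)]`, which is finite under a second moment assumption
only. -/
noncomputable def truncThirdMoment (Y : Ω → ℝ) (μ : Measure Ω) : ℝ :=
  ∫ ω, Y ω ^ 2 * min |Y ω| 1 ∂μ

lemma truncThirdMoment_nonneg : 0 ≤ truncThirdMoment Y μ :=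
  integral_nonneg fun ω ↦ by positivity

lemma norm_min_abs_one_le_one (x : ℝ) : ‖min |x| 1‖ ≤ 1 := by
  rw [norm_of_nonneg (by positivity)]
  exact min_le_right _ _

lemma aestronglyMeasurable_min_abs_one (hY : MemLp Y 2 μ) :
    AEStronglyMeasurable (fun ω ↦ min |Y ω| 1) μ :=
  (show Continuous fun x : ℝ ↦ min |x| 1 by fun_prop).comp_aestronglyMeasurable hY.1

lemma integrable_sq_mul_min_abs_one (hY : MemLp Y 2 μ) :
    Integrable (fun ω ↦ Y ω ^ 2 * min |Y ω| 1) μ :=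
  hY.integrable_sq.mul_bdd (c := 1) (aestronglyMeasurable_min_abs_one hY)
    (.of_forall fun ω ↦ norm_min_abs_one_le_one (Y ω))

lemma integrable_min_abs_one [IsFiniteMeasure μ] (hY : MemLp Y 2 μ) :
    Integrable (fun ω ↦ min |Y ω| 1) μ :=
  .of_bound (aestronglyMeasurable_min_abs_one hY) 1
    (.of_forall fun ω ↦ norm_min_abs_one_le_one (Y ω))

lemma sq_sub_mul_min_abs_one_sub_nonneg {v : ℝ} (hv : 0 ≤ v) (x : ℝ) :
    0 ≤ (x ^ 2 - v) * (min |x| 1 - min √v 1) := by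
  have hsqrt := sq_sqrt hv
  rw [← sq_abs x]
  rcases le_total |x| √v with h | h
  · have hsq : |x| ^ 2 ≤ √v ^ 2 := by gcongr
    exact mul_nonneg_of_nonpos_of_nonpos (by linarith) (sub_nonpos.2 (min_le_min_right _ h))
  · have hsq : √v ^ 2 ≤ |x| ^ 2 := by gcongr
    exact mul_nonneg (by linarith) (sub_nonneg.2 (min_le_min_right _ h))

lemma integral_sq_mul_integral_min_abs_one_le [IsProbabilityMeasure μ] (hY : MemLp Y 2 μ) :
    (∫ ω, Y ω ^ 2 ∂μ) * ∫ ω, min |Y ω| 1 ∂μ ≤ truncThirdMoment Y μ := by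
  set v := ∫ ω, Y ω ^ 2 ∂μ with hv
  -- Both factors of `(Y² - v)(min |Y| 1 - c)` change sign at the same level of `|Y|`.
  set c := min √v 1
  have hnonneg : 0 ≤ ∫ ω, (Y ω ^ 2 - v) * (min |Y ω| 1 - c) ∂μ :=
    integral_nonneg fun ω ↦
      sq_sub_mul_min_abs_one_sub_nonneg (integral_nonneg fun _ ↦ sq_nonneg _) (Y ω)
  have hexpand : ∫ ω, (Y ω ^ 2 - v) * (min |Y ω| 1 - c) ∂μ =
      truncThirdMoment Y μ - v * ∫ ω, min |Y ω| 1 ∂μ := by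
    calc ∫ ω, (Y ω ^ 2 - v) * (min |Y ω| 1 - c) ∂μ
        = ∫ ω, (Y ω ^ 2 * min |Y ω| 1 - v * min |Y ω| 1 - c * (Y ω ^ 2 - v)) ∂μ := by
          congr 1 with ω; ring
      _ = truncThirdMoment Y μ - v * ∫ ω, min |Y ω| 1 ∂μ - c * (∫ ω, Y ω ^ 2 ∂μ - v) := by
          have hthird := integrable_sq_mul_min_abs_one hY
          have hmin := (integrable_min_abs_one hY).const_mul v
          have hdev : Integrable (fun ω ↦ Y ω ^ 2 - v) μ :=
            hY.integrable_sq.sub (integrable_const v)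
          rw [integral_sub (by exact hthird.sub hmin) (hdev.const_mul c), integral_sub hthird hmin,
            integral_const_mul, integral_const_mul,
            integral_sub hY.integrable_sq (integrable_const v), integral_const, probReal_univ,
            one_smul, truncThirdMoment]
      _ = _ := by rw [← hv]; ring
  linarith

lemma sq_le_add_mul_sq_mul_min_abs_one (x : ℝ) :
    x ^ 2 ≤ 1 / 100 + 10 * (x ^ 2 * min |x| 1) := by
  rcases le_total |x| (1 / 10) with h | h
  · have hsq : x ^ 2 ≤ (1 / 10) ^ 2 := sq_le_sq' (abs_le.1 h).1 (abs_le.1 h).2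
    have : 0 ≤ x ^ 2 * min |x| 1 := by positivity
    linarith
  · have hmin : 1 / 10 ≤ min |x| 1 := le_min h (by norm_num)
    nlinarith [mul_le_mul_of_nonneg_left hmin (sq_nonneg x)]

lemma integral_sq_le_add_mul_truncThirdMoment [IsProbabilityMeasure μ] (hY : MemLp Y 2 μ) :
    ∫ ω, Y ω ^ 2 ∂μ ≤ 1 / 100 + 10 * truncThirdMoment Y μ := by
  have hthird := (integrable_sq_mul_min_abs_one hY).const_mul 10
  calc ∫ ω, Y ω ^ 2 ∂μ
      ≤ ∫ ω, (1 / 100 + 10 * (Y ω ^ 2 * min |Y ω| 1)) ∂μ :=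
        integral_mono hY.integrable_sq ((integrable_const _).add hthird)
          fun ω ↦ sq_le_add_mul_sq_mul_min_abs_one (Y ω)
    _ = 1 / 100 + 10 * truncThirdMoment Y μ := by
        rw [integral_add (integrable_const _) hthird, integral_const_mul, integral_const,
          probReal_univ, one_smul, truncThirdMoment]

lemma integral_sq_eq_zero_of_truncThirdMoment_eq_zero (hY : MemLp Y 2 μ)
    (h : truncThirdMoment Y μ = 0) : ∫ ω, Y ω ^ 2 ∂μ = 0 := by
  have hae := (integral_eq_zero_iff_of_nonneg (fun ω ↦ by positivity)
    (integrable_sq_mul_min_abs_one hY)).1 h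
  refine integral_eq_zero_of_ae ?_
  filter_upwards [hae] with ω hω
  by_contra hne
  have hne' : Y ω ≠ 0 := fun h0 ↦ hne (by simp [h0])
  have hpos : 0 < Y ω ^ 2 * min |Y ω| 1 := by positivity
  exact hpos.ne' hω

end TruncatedThirdMoment

section TruncatedArray

lemma exp_le_one_add_add_sq {x : ℝ} (hx : x ≤ 1) : exp x ≤ 1 + x + x ^ 2 := by
  rcases le_total (-1) x with h | h
  · linarith [(abs_le.1 (abs_exp_sub_one_sub_id_le (abs_le.2 ⟨h, hx⟩))).2]
  · nlinarith [exp_le_one_iff.2 (h.trans (by norm_num))]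

/-- The sum of the `X j` with `j ∈ s`; the leave-one-out sum `W̄⁽ⁱ⁾` is the case
`s = univ.erase i`. -/
def partialSum {Ω ι : Type*} (X : ι → Ω → ℝ) (s : Finset ι) (ω : Ω) : ℝ := ∑ j ∈ s, X j ω

lemma partialSum_sub_eq_partialSum_erase {Ω ι : Type*} [DecidableEq ι] (X : ι → Ω → ℝ)
    {s : Finset ι} {i : ι} (hi : i ∈ s) (ω : Ω) :
    partialSum X s ω - X i ω = partialSum X (s.erase i) ω :=
  (Finset.sum_erase_eq_sub hi).symm

variable {Ω ι : Type*} [MeasurableSpace Ω] {μ : Measure Ω}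

lemma integral_exp_le_exp_integral_sq [IsProbabilityMeasure μ] {Y : Ω → ℝ} (hY : MemLp Y 2 μ)
    (hle : ∀ ω, Y ω ≤ 1) (hmean : ∫ ω, Y ω ∂μ ≤ 0) : ∫ ω, exp (Y ω) ∂μ ≤ exp (∫ ω, Y ω ^ 2 ∂μ) := by
  have hint : Integrable Y μ := hY.integrable one_le_two
  have hint₁ : Integrable (fun ω ↦ 1 + Y ω) μ := (integrable_const 1).add hint
  calc ∫ ω, exp (Y ω) ∂μ
      ≤ ∫ ω, (1 + Y ω + Y ω ^ 2) ∂μ :=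
        integral_mono_of_nonneg (.of_forall fun ω ↦ (exp_pos _).le) (hint₁.add hY.integrable_sq)
          (.of_forall fun ω ↦ exp_le_one_add_add_sq (hle ω))
    _ = 1 + ∫ ω, Y ω ∂μ + ∫ ω, Y ω ^ 2 ∂μ := by
        rw [integral_add hint₁ hY.integrable_sq, integral_add (integrable_const 1) hint,
          integral_const, probReal_univ, one_smul]
    _ ≤ exp (∫ ω, Y ω ^ 2 ∂μ) := by linarith [add_one_le_exp (∫ ω, Y ω ^ 2 ∂μ)]

/-- Independent square-integrable summands that are bounded above by one, have nonpositive means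
and total second moment at most one: the properties of the truncations `x̄ᵢ` on which the
argument relies. -/
structure IsTruncatedArray [Fintype ι] (μ : Measure Ω) (X : ι → Ω → ℝ) : Prop where
  measurable : ∀ i, Measurable (X i)
  indep : iIndepFun X μ
  le_one : ∀ i ω, X i ω ≤ 1
  memLp_two : ∀ i, MemLp (X i) 2 μ
  integral_nonpos : ∀ i, ∫ ω, X i ω ∂μ ≤ 0
  sum_integral_sq_le_one : ∑ i, ∫ ω, X i ω ^ 2 ∂μ ≤ 1

namespace IsTruncatedArray

variable [Fintype ι] {X : ι → Ω → ℝ}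

lemma measurable_partialSum (hX : IsTruncatedArray μ X) (s : Finset ι) :
    Measurable (partialSum X s) :=
  Finset.measurable_fun_sum s fun j _ ↦ hX.measurable j

lemma partialSum_le_card (hX : IsTruncatedArray μ X) (s : Finset ι) (ω : Ω) :
    partialSum X s ω ≤ s.card := by
  simpa [partialSum] using Finset.sum_le_card_nsmul s (fun j ↦ X j ω) 1 fun j _ ↦ hX.le_one j ω

lemma indepFun_partialSum (hX : IsTruncatedArray μ X) {s : Finset ι} {i : ι} (hi : i ∉ s) :
    IndepFun (X i) (partialSum X s) μ := by
  have hsum : partialSum X s = ∑ j ∈ s, X j := by ext ω; simp [partialSum]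
  rw [hsum]
  exact (hX.indep.indepFun_finsetSum_of_notMem hX.measurable hi).symm

lemma sum_integral_sq_le (hX : IsTruncatedArray μ X) (s : Finset ι) :
    ∑ i ∈ s, ∫ ω, X i ω ^ 2 ∂μ ≤ 1 :=
  (Finset.sum_le_univ_sum_of_nonneg fun i ↦ integral_nonneg fun ω ↦ sq_nonneg (X i ω)).trans
    hX.sum_integral_sq_le_one

variable [IsProbabilityMeasure μ]

lemma integrable (hX : IsTruncatedArray μ X) (i : ι) : Integrable (X i) μ :=
  (hX.memLp_two i).integrable one_le_two

lemma integrable_comp_partialSum_of_continuous (hX : IsTruncatedArray μ X) (s : Finset ι)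
    {g : ℝ → ℝ} (hg : Continuous g) (hg_nonneg : ∀ w, 0 ≤ g w) (hg_mono : Monotone g) :
    Integrable (fun ω ↦ g (partialSum X s ω)) μ := by
  refine .of_bound (hg.measurable.comp (hX.measurable_partialSum s)).aestronglyMeasurable
    (g s.card) (.of_forall fun ω ↦ ?_)
  rw [norm_of_nonneg (hg_nonneg _)]
  exact hg_mono (hX.partialSum_le_card s ω)

lemma integral_exp_partialSum_le_exp_one (hX : IsTruncatedArray μ X) (s : Finset ι) :
    ∫ ω, exp (partialSum X s ω) ∂μ ≤ exp 1 := by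
  calc ∫ ω, exp (partialSum X s ω) ∂μ
      = mgf (∑ i ∈ s, X i) μ 1 := by simp [mgf, partialSum]
    _ = ∏ i ∈ s, mgf (X i) μ 1 := hX.indep.mgf_sum hX.measurable s
    _ ≤ ∏ i ∈ s, exp (∫ ω, X i ω ^ 2 ∂μ) :=
        Finset.prod_le_prod (fun i _ ↦ mgf_nonneg) fun i _ ↦ by
          simpa only [mgf, one_mul] using integral_exp_le_exp_integral_sq (hX.memLp_two i)
            (hX.le_one i) (hX.integral_nonpos i)
    _ = exp (∑ i ∈ s, ∫ ω, X i ω ^ 2 ∂μ) := (exp_sum _ _).symm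
    _ ≤ exp 1 := exp_le_exp.2 (hX.sum_integral_sq_le s)

lemma integral_exp_partialSum_le_three (hX : IsTruncatedArray μ X) (s : Finset ι) :
    ∫ ω, exp (partialSum X s ω) ∂μ ≤ 3 :=
  (hX.integral_exp_partialSum_le_exp_one s).trans (by linarith [exp_one_lt_d9])

end IsTruncatedArray

end TruncatedArray

section Concentration

/-- The weight `e^{w/2}` times a ramp that rises with slope one from `0` at `a - d` to `L`: the test
function of the exponentially weighted concentration inequality. -/
noncomputable def expRamp (a d L w : ℝ) : ℝ := exp (w / 2) * min (max (w - a + d) 0) L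

lemma continuous_expRamp (a d L : ℝ) : Continuous (expRamp a d L) := by
  unfold expRamp
  fun_prop

lemma expRamp_nonneg {a d L : ℝ} (hL : 0 ≤ L) (w : ℝ) : 0 ≤ expRamp a d L w := by
  unfold expRamp
  positivity

lemma expRamp_le (a d L w : ℝ) : expRamp a d L w ≤ exp (w / 2) * L :=
  mul_le_mul_of_nonneg_left (min_le_right _ _) (exp_pos _).le

lemma monotone_expRamp {a d L : ℝ} (hL : 0 ≤ L) : Monotone (expRamp a d L) := fun u v h ↦ by
  unfold expRamp
  gcongr

lemma exp_eq_exp_half_sq (w : ℝ) : exp w = exp (w / 2) ^ 2 := by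
  rw [← exp_nat_mul]
  congr 1
  push_cast
  ring

lemma mul_expRamp_le {a d L : ℝ} (hL : 0 ≤ L) (w : ℝ) : w * expRamp a d L w ≤ L * exp w :=
  calc w * expRamp a d L w ≤ exp (w / 2) * (exp (w / 2) * L) :=
        mul_le_mul (le_exp_half w) (expRamp_le a d L w) (expRamp_nonneg hL w) (exp_pos _).le
    _ = L * exp w := by rw [exp_eq_exp_half_sq w]; ring

lemma expRamp_le_one_add_exp {a d L : ℝ} (hL : 0 ≤ L) (w : ℝ) :
    expRamp a d L w ≤ L / 2 * (1 + exp w) :=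
  calc expRamp a d L w ≤ exp (w / 2) * L := expRamp_le a d L w
    _ ≤ L / 2 * (1 + exp w) := by
        rw [exp_eq_exp_half_sq w]
        nlinarith [mul_nonneg hL (sq_nonneg (exp (w / 2) - 1))]

lemma mul_expRamp_sub_expRamp_nonneg {a d L : ℝ} (hL : 0 ≤ L) (w x : ℝ) :
    0 ≤ x * (expRamp a d L w - expRamp a d L (w - x)) := by
  rcases le_total 0 x with h | h
  · exact mul_nonneg h (sub_nonneg.2 (monotone_expRamp hL (by linarith)))
  · exact mul_nonneg_of_nonpos_of_nonpos h (sub_nonpos.2 (monotone_expRamp hL (by linarith)))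

lemma expRamp_of_mem_Icc {a b d w : ℝ} (hw : w ∈ Set.Icc (a - d) (b + d)) :
    expRamp a d (b - a + 2 * d) w = exp (w / 2) * (w - a + d) := by
  rw [expRamp, max_eq_left (by linarith [hw.1]), min_eq_left (by linarith [hw.2])]

lemma exp_mul_sub_le_expRamp_sub_expRamp {a b d u v : ℝ} (hu : a - d ≤ u) (huv : u ≤ v)
    (hv : v ≤ b + d) :
    exp ((a - d) / 2) * (v - u) ≤
      expRamp a d (b - a + 2 * d) v - expRamp a d (b - a + 2 * d) u := by
  rw [expRamp_of_mem_Icc ⟨hu, huv.trans hv⟩, expRamp_of_mem_Icc ⟨hu.trans huv, hv⟩]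
  have hlow : exp ((a - d) / 2) ≤ exp (u / 2) := by gcongr
  have hexp : exp (u / 2) ≤ exp (v / 2) := by gcongr
  nlinarith

/-- The square of `x`, with one of its two factors clipped at `d`. -/
noncomputable def clippedSq (d x : ℝ) : ℝ := |x| * min |x| d

lemma continuous_clippedSq (d : ℝ) : Continuous (clippedSq d) := by
  unfold clippedSq
  fun_prop

lemma clippedSq_nonneg {d : ℝ} (hd : 0 ≤ d) (x : ℝ) : 0 ≤ clippedSq d x := by
  unfold clippedSq
  positivity

lemma clippedSq_le (d x : ℝ) : clippedSq d x ≤ d * |x| := by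
  rw [clippedSq, mul_comm]
  gcongr
  exact min_le_right _ _

lemma sq_sub_div_le_clippedSq {d : ℝ} (hd : 0 < d) (hd' : d ≤ 1 / 4) (x : ℝ) :
    x ^ 2 - x ^ 2 * min |x| 1 / (4 * d) ≤ clippedSq d x := by
  rw [clippedSq, ← sq_abs x, sub_le_iff_le_add, ← sub_le_iff_le_add', le_div_iff₀ (by linarith)]
  have hx := abs_nonneg x
  rcases le_total |x| d with h | h
  · rw [min_eq_left h, ← sq, sub_self, zero_mul]
    positivity
  · rw [min_eq_right h]
    rcases le_total |x| 1 with h₁ | h₁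
    · rw [min_eq_left h₁]
      nlinarith [mul_nonneg hx (sq_nonneg (|x| - 2 * d))]
    · rw [min_eq_right h₁]
      nlinarith [mul_nonneg hx hd.le, mul_nonneg (mul_nonneg hx hd.le) hd.le, sq_nonneg |x|]

lemma exp_mul_clippedSq_le {a b d w x : ℝ} (hd : 0 < d) (hw : w ∈ Set.Icc a b) :
    exp ((a - d) / 2) * clippedSq d x ≤
      x * (expRamp a d (b - a + 2 * d) w - expRamp a d (b - a + 2 * d) (w - x)) := by
  have hmono := monotone_expRamp (a := a) (d := d) (L := b - a + 2 * d) (by linarith [hw.1, hw.2])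
  rw [clippedSq]
  set m := min |x| d
  have hmd : m ≤ d := min_le_right _ _
  have hmx : m ≤ |x| := min_le_left _ _
  have hm : 0 ≤ m := by positivity
  rcases le_total 0 x with h | h
  · rw [abs_of_nonneg h] at hmx ⊢
    have hramp := exp_mul_sub_le_expRamp_sub_expRamp (a := a) (b := b) (d := d)
      (u := w - m) (v := w) (by linarith [hw.1]) (by linarith) (by linarith [hw.2])
    have hsub := hmono (show w - x ≤ w - m by linarith)
    rw [sub_sub_cancel] at hramp
    nlinarith
  · rw [abs_of_nonpos h] at hmx ⊢
    have hramp := exp_mul_sub_le_expRamp_sub_expRamp (a := a) (b := b) (d := d)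
      (u := w) (v := w + m) (by linarith [hw.1]) (by linarith) (by linarith [hw.2])
    have hsub := hmono (show w + m ≤ w - x by linarith)
    rw [add_sub_cancel_left] at hramp
    nlinarith

lemma one_le_exp_mul_add_div {a w d r : ℝ} (hd : 0 < d) (haw : a ≤ w) (hr : 1 ≤ r) :
    1 ≤ exp (-a / 2) / 2 * (d * exp w + r / d) := by
  have hamgm : 2 * exp (w / 2) ≤ d * exp w + r / d := by
    have hsq : d * exp w + 1 / d - 2 * exp (w / 2) = (d * exp (w / 2) - 1) ^ 2 / d := by
      rw [exp_eq_exp_half_sq w]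
      field_simp
      ring
    have hnonneg : 0 ≤ (d * exp (w / 2) - 1) ^ 2 / d := by positivity
    have hdiv : 1 / d ≤ r / d := by gcongr
    linarith
  calc (1 : ℝ) = exp (-a / 2) / 2 * (2 * exp (a / 2)) := by
        rw [neg_div, exp_neg]
        field_simp
    _ ≤ exp (-a / 2) / 2 * (2 * exp (w / 2)) := by gcongr
    _ ≤ exp (-a / 2) / 2 * (d * exp w + r / d) := by gcongr

variable {Ω ι : Type*}

/-- The discrete analogue of `f'(S)` for `f = expRamp a d L` and `S` the sum of the `X j`, `j ∈ s`,
whose expectation is controlled by Stein's identity. -/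
noncomputable def rampIncrement (a d L : ℝ) (X : ι → Ω → ℝ) (s : Finset ι) (ω : Ω) : ℝ :=
  ∑ j ∈ s, X j ω *
    (expRamp a d L (partialSum X s ω) - expRamp a d L (partialSum X s ω - X j ω))

lemma rampIncrement_eq_sub (a d L : ℝ) (X : ι → Ω → ℝ) (s : Finset ι) :
    rampIncrement a d L X s = fun ω ↦ ∑ j ∈ s, X j ω * expRamp a d L (partialSum X s ω) -
      ∑ j ∈ s, X j ω * expRamp a d L (partialSum X s ω - X j ω) := by
  ext ω
  simp only [rampIncrement, mul_sub, Finset.sum_sub_distrib]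

lemma rampIncrement_nonneg {a d L : ℝ} (hL : 0 ≤ L) (X : ι → Ω → ℝ) (s : Finset ι) (ω : Ω) :
    0 ≤ rampIncrement a d L X s ω :=
  Finset.sum_nonneg fun j _ ↦ mul_expRamp_sub_expRamp_nonneg hL _ (X j ω)

lemma exp_mul_sum_clippedSq_le_rampIncrement {a b d : ℝ} (hd : 0 < d) (X : ι → Ω → ℝ)
    {s : Finset ι} {ω : Ω} (hω : partialSum X s ω ∈ Set.Icc a b) :
    exp ((a - d) / 2) * ∑ j ∈ s, clippedSq d (X j ω) ≤
      rampIncrement a d (b - a + 2 * d) X s ω := by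
  rw [Finset.mul_sum]
  exact Finset.sum_le_sum fun j _ ↦ exp_mul_clippedSq_le hd hω

-- Where the clipped squares add up to less than `1/2`, they deviate from their mean by `1/5`.
lemma indicator_Icc_partialSum_le {a b d m : ℝ} (hd : 0 < d) (hab : a ≤ b) (hm : 72 / 100 ≤ m)
    (X : ι → Ω → ℝ) (s : Finset ι) (ω : Ω) :
    (Set.Icc a b).indicator 1 (partialSum X s ω) ≤
      2 * exp ((d - a) / 2) * rampIncrement a d (b - a + 2 * d) X s ω +
        exp (-a / 2) / 2 *
          (d * exp (partialSum X s ω) + 25 * (∑ j ∈ s, clippedSq d (X j ω) - m) ^ 2 / d) := by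
  have hramp := rampIncrement_nonneg (a := a) (d := d) (L := b - a + 2 * d) (by linarith) X s ω
  have hfirst : 0 ≤ 2 * exp ((d - a) / 2) * rampIncrement a d (b - a + 2 * d) X s ω := by
    positivity
  have hsecond : 0 ≤ exp (-a / 2) / 2 *
      (d * exp (partialSum X s ω) + 25 * (∑ j ∈ s, clippedSq d (X j ω) - m) ^ 2 / d) := by
    positivity
  by_cases hω : partialSum X s ω ∈ Set.Icc a b
  · rw [Set.indicator_of_mem hω, Pi.one_apply]
    set S := ∑ j ∈ s, clippedSq d (X j ω)
    rcases le_or_gt (1 / 2) S with hS | hS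
    · have hone : 1 ≤ 2 * exp ((d - a) / 2) * rampIncrement a d (b - a + 2 * d) X s ω :=
        calc (1 : ℝ) ≤ 2 * S := by linarith
          _ = 2 * exp ((d - a) / 2) * (exp ((a - d) / 2) * S) := by
              rw [← neg_sub a d, neg_div, exp_neg]
              field_simp
          _ ≤ _ := by
              gcongr
              exact exp_mul_sum_clippedSq_le_rampIncrement hd X hω
      linarith
    · have hdev : 1 ≤ 25 * (S - m) ^ 2 := by nlinarith
      linarith [one_le_exp_mul_add_div hd hω.1 hdev]
  · rw [Set.indicator_of_notMem hω]
    exact add_nonneg hfirst hsecond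

variable [MeasurableSpace Ω] {μ : Measure Ω}

lemma memLp_clippedSq {Y : Ω → ℝ} (hY : MemLp Y 2 μ) {d : ℝ} (hd : 0 ≤ d) :
    MemLp (fun ω ↦ clippedSq d (Y ω)) 2 μ := by
  refine (hY.const_mul d).of_le ((continuous_clippedSq d).comp_aestronglyMeasurable hY.1)
    (.of_forall fun ω ↦ ?_)
  rw [norm_of_nonneg (clippedSq_nonneg hd _), norm_mul, norm_of_nonneg hd]
  exact clippedSq_le d _

variable [IsProbabilityMeasure μ]

lemma variance_clippedSq_le {Y : Ω → ℝ} (hY : MemLp Y 2 μ) {d : ℝ} (hd : 0 ≤ d) :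
    Var[fun ω ↦ clippedSq d (Y ω); μ] ≤ d ^ 2 * ∫ ω, Y ω ^ 2 ∂μ := by
  have hmemLp := memLp_clippedSq hY hd
  refine (variance_le_expectation_sq hmemLp.1).trans ?_
  rw [← integral_const_mul]
  refine integral_mono hmemLp.integrable_sq (hY.integrable_sq.const_mul _) fun ω ↦ ?_
  simp only [Pi.pow_apply, ← sq_abs (Y ω), ← mul_pow]
  exact pow_le_pow_left₀ (clippedSq_nonneg hd _) (clippedSq_le d _) 2

variable [Fintype ι] {X : ι → Ω → ℝ}

namespace IsTruncatedArray

lemma integrable_exp_partialSum (hX : IsTruncatedArray μ X) (s : Finset ι) :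
    Integrable (fun ω ↦ exp (partialSum X s ω)) μ :=
  hX.integrable_comp_partialSum_of_continuous s continuous_exp (fun w ↦ (exp_pos w).le) exp_monotone

lemma integrable_mul_expRamp (hX : IsTruncatedArray μ X) {a d L : ℝ} (hL : 0 ≤ L) (j : ι)
    (s : Finset ι) : Integrable (fun ω ↦ X j ω * expRamp a d L (partialSum X s ω)) μ := by
  refine (hX.integrable j).mul_bdd (c := expRamp a d L s.card)
    ((continuous_expRamp a d L).measurable.comp (hX.measurable_partialSum s)).aestronglyMeasurable
    (.of_forall fun ω ↦ ?_)
  rw [norm_of_nonneg (expRamp_nonneg hL _)]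
  exact monotone_expRamp hL (hX.partialSum_le_card s ω)

lemma integrable_mul_expRamp_sub (hX : IsTruncatedArray μ X) {a d L : ℝ} (hL : 0 ≤ L)
    {s : Finset ι} {j : ι} (hj : j ∈ s) :
    Integrable (fun ω ↦ X j ω * expRamp a d L (partialSum X s ω - X j ω)) μ := by
  classical
  simp only [partialSum_sub_eq_partialSum_erase X hj]
  exact hX.integrable_mul_expRamp hL j _

lemma integral_sum_mul_expRamp_le (hX : IsTruncatedArray μ X) {a d L : ℝ} (hL : 0 ≤ L)
    (s : Finset ι) :
    ∫ ω, ∑ j ∈ s, X j ω * expRamp a d L (partialSum X s ω) ∂μ ≤ 3 * L :=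
  calc ∫ ω, ∑ j ∈ s, X j ω * expRamp a d L (partialSum X s ω) ∂μ
      ≤ ∫ ω, L * exp (partialSum X s ω) ∂μ := by
        refine integral_mono (integrable_finsetSum s fun j _ ↦ hX.integrable_mul_expRamp hL j s)
          ((hX.integrable_exp_partialSum s).const_mul L) fun ω ↦ ?_
        simp only [← Finset.sum_mul]
        exact mul_expRamp_le hL _
    _ = L * ∫ ω, exp (partialSum X s ω) ∂μ := integral_const_mul _ _
    _ ≤ 3 * L := by nlinarith [hX.integral_exp_partialSum_le_three s]

lemma integral_expRamp_le (hX : IsTruncatedArray μ X) {a d L : ℝ} (hL : 0 ≤ L) (s : Finset ι) :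
    ∫ ω, expRamp a d L (partialSum X s ω) ∂μ ≤ 2 * L := by
  have hint := hX.integrable_exp_partialSum s
  calc ∫ ω, expRamp a d L (partialSum X s ω) ∂μ
      ≤ ∫ ω, L / 2 * (1 + exp (partialSum X s ω)) ∂μ :=
        integral_mono_of_nonneg (.of_forall fun ω ↦ expRamp_nonneg hL _)
          (((integrable_const 1).add hint).const_mul _)
          (.of_forall fun ω ↦ expRamp_le_one_add_exp hL _)
    _ = L / 2 * (1 + ∫ ω, exp (partialSum X s ω) ∂μ) := by
        rw [integral_const_mul, integral_add (integrable_const 1) hint, integral_const,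
          probReal_univ, one_smul]
    _ ≤ 2 * L := by nlinarith [hX.integral_exp_partialSum_le_three s]

lemma neg_integral_mul_expRamp_sub_le (hX : IsTruncatedArray μ X) {a d L : ℝ} (hL : 0 ≤ L)
    {s : Finset ι} {j : ι} (hj : j ∈ s) :
    -∫ ω, X j ω * expRamp a d L (partialSum X s ω - X j ω) ∂μ ≤ (-∫ ω, X j ω ∂μ) * (2 * L) := by
  classical
  simp only [partialSum_sub_eq_partialSum_erase X hj]
  have hprod := (hX.indepFun_partialSum (Finset.notMem_erase j s)).integral_fun_comp_mul_comp
    (f := id) (g := expRamp a d L) (hX.measurable j).aemeasurable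
    (hX.measurable_partialSum _).aemeasurable measurable_id.aestronglyMeasurable
    (continuous_expRamp a d L).aestronglyMeasurable
  simp only [id] at hprod
  rw [hprod, ← neg_mul]
  exact mul_le_mul_of_nonneg_left (hX.integral_expRamp_le hL _)
    (neg_nonneg.2 (hX.integral_nonpos j))

lemma integrable_rampIncrement (hX : IsTruncatedArray μ X) {a d L : ℝ} (hL : 0 ≤ L)
    (s : Finset ι) : Integrable (rampIncrement a d L X s) μ := by
  rw [rampIncrement_eq_sub]
  exact (integrable_finsetSum s fun j _ ↦ hX.integrable_mul_expRamp hL j s).sub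
    (integrable_finsetSum s fun j hj ↦ hX.integrable_mul_expRamp_sub hL hj)

lemma integral_rampIncrement_le (hX : IsTruncatedArray μ X) {a d L : ℝ} (hL : 0 ≤ L)
    {s : Finset ι} (hmean : ∑ j ∈ s, -∫ ω, X j ω ∂μ ≤ 1 / 2) :
    ∫ ω, rampIncrement a d L X s ω ∂μ ≤ 4 * L := by
  have hdrift : ∑ j ∈ s, -∫ ω, X j ω * expRamp a d L (partialSum X s ω - X j ω) ∂μ ≤ L :=
    calc _ ≤ ∑ j ∈ s, (-∫ ω, X j ω ∂μ) * (2 * L) :=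
          Finset.sum_le_sum fun j hj ↦ hX.neg_integral_mul_expRamp_sub_le hL hj
      _ = (∑ j ∈ s, -∫ ω, X j ω ∂μ) * (2 * L) := (Finset.sum_mul _ _ _).symm
      _ ≤ L := by nlinarith
  have hsub : ∀ j ∈ s, Integrable (fun ω ↦ X j ω * expRamp a d L (partialSum X s ω - X j ω)) μ :=
    fun j hj ↦ hX.integrable_mul_expRamp_sub hL hj
  rw [rampIncrement_eq_sub, integral_sub (integrable_finsetSum s fun j _ ↦
    hX.integrable_mul_expRamp hL j s) (integrable_finsetSum s hsub), integral_finsetSum s hsub]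
  rw [Finset.sum_neg_distrib] at hdrift
  linarith [hX.integral_sum_mul_expRamp_le (a := a) (d := d) hL s]

lemma sum_integral_sq_sub_le_integral_sum_clippedSq (hX : IsTruncatedArray μ X) {d : ℝ}
    (hd : 0 < d) (hd' : d ≤ 1 / 4) {s : Finset ι}
    (hthird : ∑ j ∈ s, truncThirdMoment (X j) μ ≤ d) :
    ∑ j ∈ s, ∫ ω, X j ω ^ 2 ∂μ - 1 / 4 ≤ ∫ ω, ∑ j ∈ s, clippedSq d (X j ω) ∂μ := by
  have hint : ∀ j, Integrable (fun ω ↦ clippedSq d (X j ω)) μ :=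
    fun j ↦ (memLp_clippedSq (hX.memLp_two j) hd.le).integrable one_le_two
  have hterm : ∀ j ∈ s, ∫ ω, X j ω ^ 2 ∂μ - truncThirdMoment (X j) μ / (4 * d) ≤
      ∫ ω, clippedSq d (X j ω) ∂μ := fun j _ ↦ by
    have hsq := (hX.memLp_two j).integrable_sq
    have hthird := (integrable_sq_mul_min_abs_one (hX.memLp_two j)).div_const (4 * d)
    rw [truncThirdMoment, ← integral_div, ← integral_sub hsq hthird]
    exact integral_mono (hsq.sub hthird) (hint j) fun ω ↦ sq_sub_div_le_clippedSq hd hd' _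
  have hratio : (∑ j ∈ s, truncThirdMoment (X j) μ) / (4 * d) ≤ 1 / 4 := by
    rw [div_le_iff₀ (by linarith)]
    linarith
  have hsum := Finset.sum_le_sum hterm
  rw [Finset.sum_sub_distrib, ← Finset.sum_div, ← integral_finsetSum s fun j _ ↦ hint j] at hsum
  linarith

lemma variance_sum_clippedSq_le (hX : IsTruncatedArray μ X) {d : ℝ} (hd : 0 ≤ d) (s : Finset ι) :
    Var[fun ω ↦ ∑ j ∈ s, clippedSq d (X j ω); μ] ≤ d ^ 2 := by
  have hindep : Set.Pairwise ↑s fun i j ↦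
      IndepFun (fun ω ↦ clippedSq d (X i ω)) (fun ω ↦ clippedSq d (X j ω)) μ := fun i _ j _ hij ↦
    (hX.indep.indepFun hij).comp (continuous_clippedSq d).measurable
      (continuous_clippedSq d).measurable
  calc Var[fun ω ↦ ∑ j ∈ s, clippedSq d (X j ω); μ]
      = ∑ j ∈ s, Var[fun ω ↦ clippedSq d (X j ω); μ] := by
        rw [← IndepFun.variance_sum (fun j _ ↦ memLp_clippedSq (hX.memLp_two j) hd) hindep]
        congr 1 with ω
        rw [Finset.sum_apply]
    _ ≤ ∑ j ∈ s, d ^ 2 * ∫ ω, X j ω ^ 2 ∂μ :=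
        Finset.sum_le_sum fun j _ ↦ variance_clippedSq_le (hX.memLp_two j) hd
    _ = d ^ 2 * ∑ j ∈ s, ∫ ω, X j ω ^ 2 ∂μ := (Finset.mul_sum _ _ _).symm
    _ ≤ d ^ 2 := mul_le_of_le_one_right (sq_nonneg d) (hX.sum_integral_sq_le s)

lemma integral_exp_add_sq_div_le (hX : IsTruncatedArray μ X) {d : ℝ} (hd : 0 < d)
    (s : Finset ι) :
    let S := fun ω ↦ ∑ j ∈ s, clippedSq d (X j ω)
    let F := fun ω ↦ d * exp (partialSum X s ω) + 25 * (S ω - ∫ ω, S ω ∂μ) ^ 2 / d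
    Integrable F μ ∧ ∫ ω, F ω ∂μ ≤ 28 * d := by
  intro S F
  have hS : MemLp S 2 μ := memLp_finsetSum s fun j _ ↦ memLp_clippedSq (hX.memLp_two j) hd.le
  have hexp := (hX.integrable_exp_partialSum s).const_mul d
  have hdev := ((hS.sub (memLp_const (∫ ω, S ω ∂μ))).integrable_sq.const_mul 25).div_const d
  refine ⟨hexp.add hdev, ?_⟩
  calc ∫ ω, F ω ∂μ = d * ∫ ω, exp (partialSum X s ω) ∂μ + 25 * Var[S; μ] / d := by
        rw [variance_eq_integral hS.aemeasurable, ← integral_const_mul, ← integral_const_mul,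
          ← integral_div]
        exact integral_add hexp hdev
    _ ≤ d * 3 + 25 * d ^ 2 / d := by
        gcongr
        exacts [hX.integral_exp_partialSum_le_three s, hX.variance_sum_clippedSq_le hd.le s]
    _ = 28 * d := by field_simp; ring

theorem measureReal_partialSum_mem_Icc_le (hX : IsTruncatedArray μ X) {s : Finset ι} {a b d : ℝ}
    (hab : a ≤ b) (hd : 0 < d) (hd' : d ≤ 1 / 5) (hmean : ∑ j ∈ s, -∫ ω, X j ω ∂μ ≤ 1 / 2)
    (hthird : ∑ j ∈ s, truncThirdMoment (X j) μ ≤ d)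
    (hvar : 97 / 100 ≤ ∑ j ∈ s, ∫ ω, X j ω ^ 2 ∂μ) :
    μ.real (partialSum X s ⁻¹' Set.Icc a b) ≤ exp (-a / 2) * (9 * (b - a) + 32 * d) := by
  set m := ∫ ω, ∑ j ∈ s, clippedSq d (X j ω) ∂μ
  have hm : 72 / 100 ≤ m := by
    linarith [hX.sum_integral_sq_sub_le_integral_sum_clippedSq hd (by linarith) hthird]
  have hL : 0 ≤ b - a + 2 * d := by linarith
  have hramp := (hX.integrable_rampIncrement (a := a) (d := d) hL s).const_mul
    (2 * exp ((d - a) / 2))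
  obtain ⟨hdev, hdev_le⟩ := hX.integral_exp_add_sq_div_le hd s
  have hexp : exp ((d - a) / 2) ≤ exp (-a / 2) * (9 / 8) := by
    rw [show (d - a) / 2 = -a / 2 + d / 2 by ring, exp_add]
    gcongr
    nlinarith [exp_le_one_add_add_sq (x := d / 2) (by linarith)]
  calc μ.real (partialSum X s ⁻¹' Set.Icc a b)
      = ∫ ω, (Set.Icc a b).indicator 1 (partialSum X s ω) ∂μ :=
        (integral_indicator_one (hX.measurable_partialSum s measurableSet_Icc)).symm
    _ ≤ _ := integral_mono_of_nonneg
        (.of_forall fun ω ↦ Set.indicator_nonneg (fun _ _ ↦ zero_le_one) _)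
        (hramp.add (hdev.const_mul (exp (-a / 2) / 2)))
        (.of_forall (indicator_Icc_partialSum_le hd hab hm X s))
    _ = 2 * exp ((d - a) / 2) * ∫ ω, rampIncrement a d (b - a + 2 * d) X s ω ∂μ +
          exp (-a / 2) / 2 * ∫ ω, (d * exp (partialSum X s ω) +
            25 * (∑ j ∈ s, clippedSq d (X j ω) - m) ^ 2 / d) ∂μ := by
        rw [← integral_const_mul, ← integral_const_mul]
        exact integral_add hramp (hdev.const_mul _)
    _ ≤ 2 * (exp (-a / 2) * (9 / 8)) * (4 * (b - a + 2 * d)) + exp (-a / 2) / 2 * (28 * d) := by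
        have hramp_le := hX.integral_rampIncrement_le (a := a) (d := d) hL hmean
        gcongr
        exact integral_nonneg (rampIncrement_nonneg hL X s)
    _ = exp (-a / 2) * (9 * (b - a) + 32 * d) := by ring

end IsTruncatedArray

end Concentration

section SteinMethod

lemma steinIncrement_nonneg (z x w : ℝ) : 0 ≤ steinIncrement z x w := by
  have henv := steinEnvelope_nonneg z (w + 1)
  have hjump : (0 : ℝ) ≤ (Set.Icc (z - min |x| 1) (z + min |x| 1)).indicator 1 w :=
    Set.indicator_nonneg (fun _ _ ↦ zero_le_one) w
  unfold steinIncrement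
  positivity

lemma steinIncrement_le (z x : ℝ) {w c : ℝ} (hw : w ≤ c) :
    steinIncrement z x w ≤ 2 * steinEnvelope z (c + 1) + 1 := by
  have henv := steinEnvelope_nonneg z (w + 1)
  have hmono : steinEnvelope z (w + 1) ≤ steinEnvelope z (c + 1) :=
    steinEnvelope_mono z (by linarith)
  have hmin : min |x| 1 ≤ 1 := min_le_right _ _
  have hjump : (Set.Icc (z - min |x| 1) (z + min |x| 1)).indicator (1 : ℝ → ℝ) w ≤ 1 :=
    Set.indicator_le_self' (fun _ _ ↦ zero_le_one) w
  unfold steinIncrement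
  nlinarith

lemma measurable_uncurry_steinIncrement (z : ℝ) :
    Measurable (Function.uncurry (steinIncrement z)) := by
  have henv := (continuous_steinEnvelope z).measurable
  have hlower : MeasurableSet {p : ℝ × ℝ | z - min |p.1| 1 ≤ p.2} :=
    measurableSet_le (by fun_prop) (by fun_prop)
  have hupper : MeasurableSet {p : ℝ × ℝ | p.2 ≤ z + min |p.1| 1} :=
    measurableSet_le (by fun_prop) (by fun_prop)
  have hjump : Measurable fun p : ℝ × ℝ ↦
      (Set.Icc (z - min |p.1| 1) (z + min |p.1| 1)).indicator (1 : ℝ → ℝ) p.2 :=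
    .ite (hlower.inter hupper) measurable_const measurable_const
  exact .add (by fun_prop) hjump

lemma measurable_fz' (z : ℝ) : Measurable (fz' z) := by
  have hfz := (continuous_fz z).measurable
  have hind : Measurable fun w : ℝ ↦ (if w ≤ z then 1 else 0 : ℝ) :=
    .ite measurableSet_Iic measurable_const measurable_const
  unfold fz'
  fun_prop

variable {Ω ι : Type*} [MeasurableSpace Ω] {μ : Measure Ω}

lemma integral_comp_le_of_indepFun [IsProbabilityMeasure μ] {α β : Type*} [MeasurableSpace α]
    [MeasurableSpace β] {A : Ω → α} {B : Ω → β} (hA : Measurable A) (hB : Measurable B)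
    (hAB : IndepFun A B μ) {h : α → β → ℝ} (hh : Measurable (Function.uncurry h))
    (hint : Integrable (fun ω ↦ h (A ω) (B ω)) μ) {k : α → ℝ}
    (hk : Integrable (fun ω ↦ k (A ω)) μ) (hle : ∀ a, ∫ ω, h a (B ω) ∂μ ≤ k a) :
    ∫ ω, h (A ω) (B ω) ∂μ ≤ ∫ ω, k (A ω) ∂μ := by
  have hmap := (indepFun_iff_map_prod_eq_prod_map_map hA.aemeasurable hB.aemeasurable).1 hAB
  have := Measure.isProbabilityMeasure_map (μ := μ) hA.aemeasurable
  have := Measure.isProbabilityMeasure_map (μ := μ) hB.aemeasurable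
  have hprod : Integrable (Function.uncurry h) ((μ.map A).prod (μ.map B)) := by
    rw [← hmap]
    exact (integrable_map_measure hh.aestronglyMeasurable (hA.prodMk hB).aemeasurable).2 hint
  have hinner : ∀ a, ∫ b, h a b ∂μ.map B = ∫ ω, h a (B ω) ∂μ := fun a ↦
    integral_map hB.aemeasurable hh.of_uncurry_left.aestronglyMeasurable
  calc ∫ ω, h (A ω) (B ω) ∂μ
      = ∫ p, Function.uncurry h p ∂(μ.map A).prod (μ.map B) := by
        rw [← hmap, integral_map (hA.prodMk hB).aemeasurable hh.aestronglyMeasurable]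
        rfl
    _ = ∫ a, ∫ b, h a b ∂μ.map B ∂μ.map A := integral_prod _ hprod
    _ = ∫ ω, ∫ b, h (A ω) b ∂μ.map B ∂μ :=
        integral_map hA.aemeasurable hprod.integral_prod_left.aestronglyMeasurable
    _ ≤ ∫ ω, k (A ω) ∂μ :=
        integral_mono (hprod.integral_prod_left.comp_measurable hA) hk
          fun ω ↦ (hinner (A ω)).trans_le (hle (A ω))

variable [Fintype ι] {X : ι → Ω → ℝ}

/-- The ways in which the sum of an array can fail to be nearly standard normal (a negative mean,
third moments, a variance below one) are all quantitatively bounded by `δ`. -/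
structure HasDefectLE (μ : Measure Ω) (X : ι → Ω → ℝ) (δ : ℝ) : Prop where
  mean : ∑ j, -∫ ω, X j ω ∂μ ≤ δ
  third : ∑ j, truncThirdMoment (X j) μ ≤ δ
  var : 1 - δ ≤ ∑ j, ∫ ω, X j ω ^ 2 ∂μ

namespace IsTruncatedArray

lemma defect_pos (hX : IsTruncatedArray μ X) {δ : ℝ} (hδ : HasDefectLE μ X δ) : 0 < δ := by
  by_contra! hle
  have hthird : ∀ j ∈ Finset.univ, truncThirdMoment (X j) μ = 0 :=
    (Finset.sum_eq_zero_iff_of_nonneg fun j _ ↦ truncThirdMoment_nonneg).1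
      ((hδ.third.trans hle).antisymm (Finset.sum_nonneg fun j _ ↦ truncThirdMoment_nonneg))
  have hvar : ∑ j, ∫ ω, X j ω ^ 2 ∂μ = 0 := Finset.sum_eq_zero fun j hj ↦
    integral_sq_eq_zero_of_truncThirdMoment_eq_zero (hX.memLp_two j) (hthird j hj)
  linarith [hδ.var]

lemma integrable_mul_comp_partialSum (hX : IsTruncatedArray μ X) (s : Finset ι)
    {z : ℝ} {g : ℝ → ℝ} (hg : Measurable g) (hle : ∀ w, |g w| ≤ steinEnvelope z w) {Y : Ω → ℝ}
    (hY : Integrable Y μ) : Integrable (fun ω ↦ Y ω * g (partialSum X s ω)) μ :=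
  hY.mul_bdd (c := steinEnvelope z s.card)
    (hg.comp (hX.measurable_partialSum s)).aestronglyMeasurable
    (.of_forall fun ω ↦ (hle _).trans (steinEnvelope_mono z (hX.partialSum_le_card s ω)))

lemma integrable_mul_steinIncrement [DecidableEq ι] (hX : IsTruncatedArray μ X) (z : ℝ) (i : ι)
    {u : ℝ → ℝ} (hu : Integrable (fun ω ↦ u (X i ω)) μ) :
    Integrable (fun ω ↦ u (X i ω) *
      steinIncrement z (X i ω) (partialSum X (Finset.univ.erase i) ω)) μ := by
  refine hu.mul_bdd (c := 2 * steinEnvelope z ((Finset.univ.erase i).card + 1) + 1)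
    ((measurable_uncurry_steinIncrement z).comp
      ((hX.measurable i).prodMk (hX.measurable_partialSum _))).aestronglyMeasurable
    (.of_forall fun ω ↦ ?_)
  rw [norm_of_nonneg (steinIncrement_nonneg _ _ _)]
  exact steinIncrement_le _ _ (hX.partialSum_le_card _ ω)

variable [IsProbabilityMeasure μ]

lemma integral_sq_le_of_hasDefectLE (hX : IsTruncatedArray μ X) {δ : ℝ}
    (hδ : HasDefectLE μ X δ) (i : ι) : ∫ ω, X i ω ^ 2 ∂μ ≤ 1 / 100 + 10 * δ := by
  have hsingle : truncThirdMoment (X i) μ ≤ ∑ j, truncThirdMoment (X j) μ :=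
    Finset.single_le_sum (f := fun j ↦ truncThirdMoment (X j) μ)
      (fun j _ ↦ truncThirdMoment_nonneg) (Finset.mem_univ i)
  linarith [integral_sq_le_add_mul_truncThirdMoment (hX.memLp_two i), hδ.third]

lemma integrable_steinEnvelope_partialSum_add (hX : IsTruncatedArray μ X) (z c : ℝ)
    (s : Finset ι) : Integrable (fun ω ↦ steinEnvelope z (partialSum X s ω + c)) μ :=
  hX.integrable_comp_partialSum_of_continuous s (g := fun w ↦ steinEnvelope z (w + c))
    ((continuous_steinEnvelope z).comp (continuous_add_const c)) (fun w ↦ steinEnvelope_nonneg z _)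
    ((steinEnvelope_mono z).comp fun _ _ h ↦ by gcongr)

lemma integral_steinEnvelope_partialSum_add_le (hX : IsTruncatedArray μ X) (z c : ℝ)
    (s : Finset ι) : ∫ ω, steinEnvelope z (partialSum X s ω + c) ∂μ ≤
      4 * exp (-z / 2) * (1 + 3 * exp c) := by
  have hint := (hX.integrable_exp_partialSum s).mul_const (exp c)
  calc ∫ ω, steinEnvelope z (partialSum X s ω + c) ∂μ
      = 4 * exp (-z / 2) * (1 + (∫ ω, exp (partialSum X s ω) ∂μ) * exp c) := by
        simp only [steinEnvelope, exp_add]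
        rw [integral_const_mul, integral_add (integrable_const 1) hint, integral_mul_const,
          integral_const, probReal_univ, one_smul]
    _ ≤ 4 * exp (-z / 2) * (1 + 3 * exp c) := by
        gcongr
        exact hX.integral_exp_partialSum_le_three s

section Dominated

variable {z : ℝ} {g : ℝ → ℝ}

lemma integrable_comp_partialSum (hX : IsTruncatedArray μ X) (s : Finset ι) (hg : Measurable g)
    (hle : ∀ w, |g w| ≤ steinEnvelope z w) : Integrable (fun ω ↦ g (partialSum X s ω)) μ :=
  .mono' (by simpa using hX.integrable_steinEnvelope_partialSum_add z 0 s)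
    (hg.comp (hX.measurable_partialSum s)).aestronglyMeasurable (.of_forall fun ω ↦ hle _)

lemma abs_integral_comp_partialSum_le (hX : IsTruncatedArray μ X) (s : Finset ι)
    (hle : ∀ w, |g w| ≤ steinEnvelope z w) :
    |∫ ω, g (partialSum X s ω) ∂μ| ≤ 16 * exp (-z / 2) := by
  have hint := hX.integrable_steinEnvelope_partialSum_add z 0 s
  have henv := hX.integral_steinEnvelope_partialSum_add_le z 0 s
  simp only [add_zero, exp_zero] at hint henv
  rw [← norm_eq_abs]
  exact (norm_integral_le_of_norm_le hint (.of_forall fun ω ↦ hle _)).trans (by linarith)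

end Dominated

section LeaveOneOut

variable [DecidableEq ι] {δ : ℝ}

lemma measureReal_partialSum_erase_mem_Icc_le (hX : IsTruncatedArray μ X)
    (hδ : HasDefectLE μ X δ) (hδ_le : δ ≤ 1 / 1000) (i : ι) {a b : ℝ} (hab : a ≤ b) :
    μ.real (partialSum X (Finset.univ.erase i) ⁻¹' Set.Icc a b) ≤
      exp (-a / 2) * (9 * (b - a) + 32 * δ) := by
  have hmean : ∑ j ∈ Finset.univ.erase i, -∫ ω, X j ω ∂μ ≤ δ :=
    (Finset.sum_le_univ_sum_of_nonneg fun j ↦ neg_nonneg.2 (hX.integral_nonpos j)).trans hδ.mean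
  have hthird : ∑ j ∈ Finset.univ.erase i, truncThirdMoment (X j) μ ≤ δ :=
    (Finset.sum_le_univ_sum_of_nonneg fun j ↦ truncThirdMoment_nonneg).trans hδ.third
  have hvar := Finset.add_sum_erase Finset.univ (fun j ↦ ∫ ω, X j ω ^ 2 ∂μ) (Finset.mem_univ i)
  refine hX.measureReal_partialSum_mem_Icc_le hab (hX.defect_pos hδ) ?_ ?_ hthird ?_
  all_goals linarith [hX.integral_sq_le_of_hasDefectLE hδ i, hδ.var]

lemma integral_steinIncrement_le (hX : IsTruncatedArray μ X) (hδ : HasDefectLE μ X δ)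
    (hδ_le : δ ≤ 1 / 1000) (z : ℝ) (i : ι) (x : ℝ) :
    ∫ ω, steinIncrement z x (partialSum X (Finset.univ.erase i) ω) ∂μ ≤
      110 * exp (-z / 2) * (min |x| 1 + δ) := by
  set S := partialSum X (Finset.univ.erase i)
  set m := min |x| 1
  have hδ_pos := hX.defect_pos hδ
  have hm : 0 ≤ m := by positivity
  have henv : ∫ ω, steinEnvelope z (S ω + 1) ∂μ ≤ 37 * exp (-z / 2) := by
    nlinarith [hX.integral_steinEnvelope_partialSum_add_le z 1 (Finset.univ.erase i),
      exp_pos (-z / 2), exp_one_lt_d9]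
  have hjump : μ.real (S ⁻¹' Set.Icc (z - m) (z + m)) ≤ 2 * exp (-z / 2) * (18 * m + 32 * δ) := by
    have hexp : exp (-(z - m) / 2) ≤ 2 * exp (-z / 2) := by
      rw [show -(z - m) / 2 = m / 2 + -z / 2 by ring, exp_add]
      gcongr
      nlinarith [exp_le_one_add_add_sq (x := m / 2) (by linarith [min_le_right |x| 1]),
        min_le_right |x| 1]
    calc _ ≤ exp (-(z - m) / 2) * (9 * (z + m - (z - m)) + 32 * δ) :=
          hX.measureReal_partialSum_erase_mem_Icc_le hδ hδ_le i (by linarith)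
      _ = exp (-(z - m) / 2) * (18 * m + 32 * δ) := by ring
      _ ≤ _ := by gcongr
  have hset : MeasurableSet (S ⁻¹' Set.Icc (z - m) (z + m)) :=
    hX.measurable_partialSum _ measurableSet_Icc
  calc ∫ ω, steinIncrement z x (S ω) ∂μ
      = 2 * m * ∫ ω, steinEnvelope z (S ω + 1) ∂μ + μ.real (S ⁻¹' Set.Icc (z - m) (z + m)) := by
        rw [← integral_const_mul, ← integral_indicator_one hset]
        exact integral_add ((hX.integrable_steinEnvelope_partialSum_add z 1 _).const_mul _)
          ((integrable_const 1).indicator hset)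
    _ ≤ 2 * m * (37 * exp (-z / 2)) + 2 * exp (-z / 2) * (18 * m + 32 * δ) := by gcongr
    _ ≤ 110 * exp (-z / 2) * (m + δ) := by nlinarith [mul_pos (exp_pos (-z / 2)) hδ_pos]

lemma integral_mul_steinIncrement_le (hX : IsTruncatedArray μ X) (hδ : HasDefectLE μ X δ)
    (hδ_le : δ ≤ 1 / 1000) (z : ℝ) (i : ι) {u : ℝ → ℝ} (hu : Measurable u)
    (hu_nonneg : ∀ x, 0 ≤ u x) (hu_int : Integrable (fun ω ↦ u (X i ω)) μ) :
    ∫ ω, u (X i ω) * steinIncrement z (X i ω) (partialSum X (Finset.univ.erase i) ω) ∂μ ≤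
      110 * exp (-z / 2) * (∫ ω, u (X i ω) * min |X i ω| 1 ∂μ + δ * ∫ ω, u (X i ω) ∂μ) := by
  have hmin : Integrable (fun ω ↦ u (X i ω) * min |X i ω| 1) μ :=
    hu_int.mul_bdd (c := 1) (aestronglyMeasurable_min_abs_one (hX.memLp_two i))
      (.of_forall fun ω ↦ norm_min_abs_one_le_one _)
  have hbound := (hmin.add (hu_int.const_mul δ)).const_mul (110 * exp (-z / 2))
  calc ∫ ω, u (X i ω) * steinIncrement z (X i ω) (partialSum X (Finset.univ.erase i) ω) ∂μ
      ≤ ∫ ω, 110 * exp (-z / 2) * (u (X i ω) * min |X i ω| 1 + δ * u (X i ω)) ∂μ :=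
        integral_comp_le_of_indepFun (hX.measurable i) (hX.measurable_partialSum _)
          (hX.indepFun_partialSum (Finset.notMem_erase i _))
          (h := fun x w ↦ u x * steinIncrement z x w)
          (k := fun x ↦ 110 * exp (-z / 2) * (u x * min |x| 1 + δ * u x))
          ((hu.comp measurable_fst).mul (measurable_uncurry_steinIncrement z))
          (hX.integrable_mul_steinIncrement z i hu_int) hbound fun x ↦ by
            rw [integral_const_mul]
            nlinarith [mul_le_mul_of_nonneg_left (hX.integral_steinIncrement_le hδ hδ_le z i x)
              (hu_nonneg x)]
    _ = _ := by
        rw [integral_const_mul, integral_add hmin (hu_int.const_mul δ), integral_const_mul]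

variable {z : ℝ}

lemma abs_integral_fz'_sub_integral_fz'_erase_le (hX : IsTruncatedArray μ X)
    (hδ : HasDefectLE μ X δ) (hδ_le : δ ≤ 1 / 1000) (hz : 2 ≤ z) (i : ι) :
    |∫ ω, fz' z (partialSum X Finset.univ ω) ∂μ -
        ∫ ω, fz' z (partialSum X (Finset.univ.erase i) ω) ∂μ| ≤
      110 * exp (-z / 2) * (∫ ω, min |X i ω| 1 ∂μ + δ) := by
  have hint := fun s ↦ hX.integrable_comp_partialSum s (measurable_fz' z) (abs_fz'_le hz)
  have hinc := hX.integrable_mul_steinIncrement z i (u := fun _ ↦ 1) (integrable_const 1)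
  have hle := hX.integral_mul_steinIncrement_le hδ hδ_le z i (u := fun _ ↦ 1) measurable_const
    (fun _ ↦ zero_le_one) (integrable_const 1)
  simp only [one_mul, integral_const, probReal_univ, one_smul, mul_one] at hinc hle
  rw [← integral_sub (hint _) (hint _), ← norm_eq_abs]
  refine (norm_integral_le_of_norm_le hinc (.of_forall fun ω ↦ ?_)).trans hle
  rw [eq_add_of_sub_eq (partialSum_sub_eq_partialSum_erase X (Finset.mem_univ i) ω)]
  exact abs_fz'_add_sub_fz'_le hz (hX.le_one i ω) _

lemma abs_integral_mul_fz_sub_fz_erase_sub_le (hX : IsTruncatedArray μ X)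
    (hδ : HasDefectLE μ X δ) (hδ_le : δ ≤ 1 / 1000) (hz : 2 ≤ z) (i : ι) :
    |∫ ω, X i ω * (fz z (partialSum X Finset.univ ω) - fz z (partialSum X (Finset.univ.erase i) ω) -
        X i ω * fz' z (partialSum X (Finset.univ.erase i) ω)) ∂μ| ≤
      110 * exp (-z / 2) * (truncThirdMoment (X i) μ + δ * ∫ ω, X i ω ^ 2 ∂μ) := by
  have hsq := (hX.memLp_two i).integrable_sq
  have hle := hX.integral_mul_steinIncrement_le hδ hδ_le z i (u := fun x ↦ x ^ 2) (by fun_prop)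
    (fun _ ↦ sq_nonneg _) hsq
  have hinc := hX.integrable_mul_steinIncrement z i (u := fun x ↦ x ^ 2) hsq
  rw [← norm_eq_abs]
  refine (norm_integral_le_of_norm_le hinc (.of_forall fun ω ↦ ?_)).trans hle
  rw [eq_add_of_sub_eq (partialSum_sub_eq_partialSum_erase X (Finset.mem_univ i) ω), norm_mul,
    norm_eq_abs, norm_eq_abs, ← sq_abs (X i ω), sq, mul_assoc]
  gcongr
  exact abs_fz_add_sub_fz_sub_mul_fz'_le hz (hX.le_one i ω) _

lemma integral_mul_fz_sub_fz_erase_sub_eq (hX : IsTruncatedArray μ X) (hz : 2 ≤ z) (i : ι) :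
    ∫ ω, X i ω * (fz z (partialSum X Finset.univ ω) - fz z (partialSum X (Finset.univ.erase i) ω) -
        X i ω * fz' z (partialSum X (Finset.univ.erase i) ω)) ∂μ =
      ∫ ω, X i ω * fz z (partialSum X Finset.univ ω) ∂μ -
        (∫ ω, X i ω ∂μ) * (∫ ω, fz z (partialSum X (Finset.univ.erase i) ω) ∂μ) -
        (∫ ω, X i ω ^ 2 ∂μ) * ∫ ω, fz' z (partialSum X (Finset.univ.erase i) ω) ∂μ := by
  have hmeas := (continuous_fz z).measurable
  have hindep := hX.indepFun_partialSum (Finset.notMem_erase i Finset.univ)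
  have hsum := (hX.measurable_partialSum (Finset.univ.erase i)).aemeasurable (μ := μ)
  have hfirst := hindep.integral_fun_comp_mul_comp (f := fun x ↦ x) (g := fz z)
    (hX.measurable i).aemeasurable hsum (by fun_prop) hmeas.aestronglyMeasurable
  have hsecond := hindep.integral_fun_comp_mul_comp (f := fun x ↦ x ^ 2) (g := fz' z)
    (hX.measurable i).aemeasurable hsum (by fun_prop) (measurable_fz' z).aestronglyMeasurable
  have hint := fun s ↦ hX.integrable_mul_comp_partialSum s hmeas (abs_fz_le hz) (hX.integrable i)
  have hint' := hX.integrable_mul_comp_partialSum (Finset.univ.erase i) (measurable_fz' z)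
    (abs_fz'_le hz) (hX.memLp_two i).integrable_sq
  rw [← hfirst, ← hsecond, ← integral_sub (hint _) (hint _),
    ← integral_sub (by exact (hint _).sub (hint _)) hint']
  congr 1 with ω
  ring

end LeaveOneOut

variable {z : ℝ}

-- With `v = E Xᵢ²`, `W = S + Xᵢ` and `f = f_z`, the difference is
-- `v E[f'(W) - f'(S)] - E Xᵢ E f(S) - E[Xᵢ (f(W) - f(S) - Xᵢ f'(S))]`.
lemma abs_integral_sq_mul_integral_fz'_sub_le (hX : IsTruncatedArray μ X) {δ : ℝ}
    (hδ : HasDefectLE μ X δ) (hδ_le : δ ≤ 1 / 1000) (hz : 2 ≤ z) (i : ι) :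
    |(∫ ω, X i ω ^ 2 ∂μ) * ∫ ω, fz' z (partialSum X Finset.univ ω) ∂μ -
        ∫ ω, X i ω * fz z (partialSum X Finset.univ ω) ∂μ| ≤
      exp (-z / 2) * (220 * (truncThirdMoment (X i) μ + δ * ∫ ω, X i ω ^ 2 ∂μ) +
        16 * -∫ ω, X i ω ∂μ) := by
  classical
  have hincrement := hX.abs_integral_fz'_sub_integral_fz'_erase_le hδ hδ_le hz i
  have hremainder := hX.abs_integral_mul_fz_sub_fz_erase_sub_le hδ hδ_le hz i
  rw [hX.integral_mul_fz_sub_fz_erase_sub_eq hz i] at hremainder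
  have hfz := hX.abs_integral_comp_partialSum_le (Finset.univ.erase i) (abs_fz_le hz)
  have hassoc := integral_sq_mul_integral_min_abs_one_le (hX.memLp_two i)
  have hmean := hX.integral_nonpos i
  have hv : 0 ≤ ∫ ω, X i ω ^ 2 ∂μ := integral_nonneg fun ω ↦ sq_nonneg _
  generalize ∫ ω, X i ω ^ 2 ∂μ = v at *
  generalize ∫ ω, X i ω ∂μ = e at *
  generalize ∫ ω, fz z (partialSum X (Finset.univ.erase i) ω) ∂μ = F at *
  generalize ∫ ω, fz' z (partialSum X (Finset.univ.erase i) ω) ∂μ = F' at *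
  generalize ∫ ω, fz' z (partialSum X Finset.univ ω) ∂μ = G' at *
  generalize ∫ ω, X i ω * fz z (partialSum X Finset.univ ω) ∂μ = I at *
  have hvar : |v * (G' - F')| ≤ 110 * exp (-z / 2) * (truncThirdMoment (X i) μ + δ * v) := by
    rw [abs_mul, abs_of_nonneg hv]
    nlinarith [mul_le_mul_of_nonneg_left hincrement hv,
      mul_le_mul_of_nonneg_left hassoc (exp_pos (-z / 2)).le]
  have hdrift : |e * F| ≤ -e * (16 * exp (-z / 2)) := by
    rw [abs_mul, abs_of_nonpos hmean]
    exact mul_le_mul_of_nonneg_left hfz (neg_nonneg.2 hmean)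
  calc |v * G' - I| = |v * (G' - F') - e * F - (I - e * F - v * F')| := by congr 1; ring
    _ ≤ |v * (G' - F')| + |e * F| + |I - e * F - v * F'| :=
        (abs_sub _ _).trans (by gcongr; exact abs_sub _ _)
    _ ≤ _ := by linarith

lemma measureReal_partialSum_le_sub_Phi_eq (hX : IsTruncatedArray μ X) (hz : 2 ≤ z) :
    μ.real {ω | partialSum X Finset.univ ω ≤ z} - Phi z =
      ∫ ω, fz' z (partialSum X Finset.univ ω) ∂μ -
        ∑ i, ∫ ω, X i ω * fz z (partialSum X Finset.univ ω) ∂μ := by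
  have hset : MeasurableSet {ω | partialSum X Finset.univ ω ≤ z} :=
    measurableSet_le (hX.measurable_partialSum _) measurable_const
  have hint := fun i ↦ hX.integrable_mul_comp_partialSum Finset.univ (continuous_fz z).measurable
    (abs_fz_le hz) (hX.integrable i)
  rw [← integral_finsetSum _ fun i _ ↦ hint i, ← integral_sub
    (hX.integrable_comp_partialSum _ (measurable_fz' z) (abs_fz'_le hz))
    (integrable_finsetSum _ fun i _ ↦ hint i)]
  calc μ.real {ω | partialSum X Finset.univ ω ≤ z} - Phi z
      = ∫ ω, ({ω | partialSum X Finset.univ ω ≤ z}.indicator 1 ω - Phi z) ∂μ := by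
        rw [integral_sub ((integrable_const 1).indicator hset) (integrable_const _),
          integral_indicator_one hset, integral_const, probReal_univ, one_smul]
    _ = _ := by
        congr 1 with ω
        rw [← Finset.sum_mul]
        by_cases h : ∑ j, X j ω ≤ z <;> simp [fz', partialSum, h, add_sub_assoc]

theorem abs_measureReal_partialSum_le_sub_Phi_le (hX : IsTruncatedArray μ X) {δ : ℝ}
    (hδ : HasDefectLE μ X δ) (hδ_le : δ ≤ 1 / 1000) (hz : 2 ≤ z) :
    |μ.real {ω | partialSum X Finset.univ ω ≤ z} - Phi z| ≤ 472 * exp (-z / 2) * δ := by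
  classical
  set G := ∫ ω, fz' z (partialSum X Finset.univ ω) ∂μ
  set I := fun i ↦ ∫ ω, X i ω * fz z (partialSum X Finset.univ ω) ∂μ
  have hδ_pos := hX.defect_pos hδ
  have hvariance : |(1 - ∑ i, ∫ ω, X i ω ^ 2 ∂μ) * G| ≤ δ * (16 * exp (-z / 2)) := by
    rw [abs_mul, abs_of_nonneg (sub_nonneg.2 hX.sum_integral_sq_le_one)]
    exact mul_le_mul (by linarith [hδ.var]) (hX.abs_integral_comp_partialSum_le _ (abs_fz'_le hz))
      (abs_nonneg _) hδ_pos.le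
  have hterms : |∑ i, ((∫ ω, X i ω ^ 2 ∂μ) * G - I i)| ≤ exp (-z / 2) * (456 * δ) :=
    calc |∑ i, ((∫ ω, X i ω ^ 2 ∂μ) * G - I i)|
        ≤ ∑ i, exp (-z / 2) * (220 * (truncThirdMoment (X i) μ + δ * ∫ ω, X i ω ^ 2 ∂μ) +
            16 * -∫ ω, X i ω ∂μ) :=
          (Finset.abs_sum_le_sum_abs _ _).trans (Finset.sum_le_sum fun i _ ↦
            hX.abs_integral_sq_mul_integral_fz'_sub_le hδ hδ_le hz i)
      _ = exp (-z / 2) * (220 * (∑ i, truncThirdMoment (X i) μ + δ * ∑ i, ∫ ω, X i ω ^ 2 ∂μ) +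
            16 * ∑ i, -∫ ω, X i ω ∂μ) := by
          simp only [← Finset.mul_sum, Finset.sum_add_distrib]
      _ ≤ exp (-z / 2) * (456 * δ) := by
          gcongr
          linarith [hδ.third, hδ.mean,
            mul_le_mul_of_nonneg_left hX.sum_integral_sq_le_one hδ_pos.le]
  calc |μ.real {ω | partialSum X Finset.univ ω ≤ z} - Phi z|
      = |(1 - ∑ i, ∫ ω, X i ω ^ 2 ∂μ) * G + ∑ i, ((∫ ω, X i ω ^ 2 ∂μ) * G - I i)| := by
        rw [hX.measureReal_partialSum_le_sub_Phi_eq hz, Finset.sum_sub_distrib, ← Finset.sum_mul]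
        congr 1
        ring
    _ ≤ δ * (16 * exp (-z / 2)) + exp (-z / 2) * (456 * δ) :=
        (abs_add_le _ _).trans (add_le_add hvariance hterms)
    _ = 472 * exp (-z / 2) * δ := by ring

lemma abs_measureReal_partialSum_le_sub_Phi_le_exp (hX : IsTruncatedArray μ X) (hz : 2 ≤ z) :
    |μ.real {ω | partialSum X Finset.univ ω ≤ z} - Phi z| ≤ exp (-z / 2) := by
  have hexp : exp (-z) * exp 1 ≤ exp (-z / 2) := by
    rw [← exp_add]
    exact exp_le_exp.2 (by linarith)
  have hchernoff : μ.real {ω | z ≤ partialSum X Finset.univ ω} ≤ exp (-z / 2) :=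
    calc _ ≤ exp (-1 * z) * mgf (partialSum X Finset.univ) μ 1 :=
          measure_ge_le_exp_mul_mgf z zero_le_one
            (by simpa using hX.integrable_exp_partialSum Finset.univ)
      _ ≤ exp (-z) * exp 1 := by
          simp only [mgf, neg_one_mul, one_mul]
          gcongr
          exact hX.integral_exp_partialSum_le_exp_one _
      _ ≤ exp (-z / 2) := hexp
  have htail : 1 - μ.real {ω | partialSum X Finset.univ ω ≤ z} ≤ exp (-z / 2) := by
    rw [← probReal_compl_eq_one_sub
      (measurableSet_le (hX.measurable_partialSum _) measurable_const)]
    have hsub : {ω | partialSum X Finset.univ ω ≤ z}ᶜ ⊆ {ω | z ≤ partialSum X Finset.univ ω} :=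
      fun ω hω ↦ (lt_of_not_ge (α := ℝ) hω).le
    exact (measureReal_mono hsub).trans hchernoff
  have hgauss : 1 - Phi z ≤ exp (-z / 2) := by
    linarith [one_sub_Phi_le_exp_neg_div_two hz, exp_pos (-z),
      exp_le_exp.2 (show -z ≤ -z / 2 by linarith)]
  rw [abs_le]
  constructor <;> linarith [Phi_le_one z,
    measureReal_le_one (μ := μ) (s := {ω | partialSum X Finset.univ ω ≤ z})]

end IsTruncatedArray

end SteinMethod

section Truncation

variable {Ω : Type*} {n : ℕ} (ξ : Fin n → Ω → ℝ) (i : Fin n) (ω : Ω)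

lemma xbar_le_one : xbar ξ i ω ≤ 1 := by
  unfold xbar
  split_ifs with h
  exacts [h, zero_le_one]

lemma abs_xbar_le_abs : |xbar ξ i ω| ≤ |ξ i ω| := by
  unfold xbar
  split_ifs <;> simp

lemma xbar_le_self : xbar ξ i ω ≤ ξ i ω := by
  unfold xbar
  split_ifs with h
  exacts [le_rfl, zero_le_one.trans (not_le.1 h).le]

lemma sub_xbar_le : ξ i ω - xbar ξ i ω ≤ if 1 < |ξ i ω| then ξ i ω ^ 2 else 0 := by
  unfold xbar
  by_cases h : ξ i ω ≤ 1
  · rw [if_pos h, sub_self]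
    split_ifs <;> positivity
  · rw [if_neg h, if_pos ((not_le.1 h).trans_le (le_abs_self _))]
    nlinarith

lemma sq_le_sq_xbar_add :
    ξ i ω ^ 2 ≤ xbar ξ i ω ^ 2 + if 1 < |ξ i ω| then ξ i ω ^ 2 else 0 := by
  unfold xbar
  by_cases h : ξ i ω ≤ 1
  · rw [if_pos h, le_add_iff_nonneg_right]
    split_ifs <;> positivity
  · simp [if_neg h, if_pos ((not_le.1 h).trans_le (le_abs_self _))]

lemma sq_xbar_mul_min_abs_one_le :
    xbar ξ i ω ^ 2 * min |xbar ξ i ω| 1 ≤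
      (if 1 < |ξ i ω| then ξ i ω ^ 2 else 0) + if |ξ i ω| ≤ 1 then |ξ i ω| ^ 3 else 0 := by
  have hsq : xbar ξ i ω ^ 2 ≤ ξ i ω ^ 2 := sq_le_sq.2 (abs_xbar_le_abs ξ i ω)
  rcases le_or_gt |ξ i ω| 1 with h | h
  · rw [if_neg h.not_gt, if_pos h, zero_add, pow_succ |ξ i ω|, sq_abs]
    exact mul_le_mul hsq ((min_le_left _ _).trans (abs_xbar_le_abs ξ i ω)) (by positivity)
      (sq_nonneg _)
  · rw [if_pos h, if_neg h.not_ge, add_zero]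
    exact (mul_le_of_le_one_right (sq_nonneg _) (min_le_right _ _)).trans hsq

variable {ξ} {i}

lemma measurable_xbar [MeasurableSpace Ω] (hmeas : Measurable (ξ i)) : Measurable (xbar ξ i) :=
  .ite (measurableSet_le hmeas measurable_const) hmeas measurable_const

variable [MeasureSpace Ω]

lemma memLp_xbar (hmeas : Measurable (ξ i)) (hL2 : MemLp (ξ i) 2) : MemLp (xbar ξ i) 2 :=
  hL2.of_le (measurable_xbar hmeas).aestronglyMeasurable (.of_forall fun ω ↦ abs_xbar_le_abs ξ i ω)

lemma integrable_ite_one_lt_abs_sq (hmeas : Measurable (ξ i)) (hL2 : MemLp (ξ i) 2) :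
    Integrable fun ω ↦ if 1 < |ξ i ω| then ξ i ω ^ 2 else 0 :=
  hL2.integrable_sq.indicator (measurableSet_lt measurable_const hmeas.abs)

lemma integrable_ite_abs_le_one_abs_pow_three (hmeas : Measurable (ξ i)) (hL2 : MemLp (ξ i) 2) :
    Integrable fun ω ↦ if |ξ i ω| ≤ 1 then |ξ i ω| ^ 3 else 0 := by
  have hset : MeasurableSet {ω | |ξ i ω| ≤ 1} := measurableSet_le hmeas.abs measurable_const
  refine hL2.integrable_sq.mono'
    (Measurable.ite hset (by fun_prop) measurable_const).aestronglyMeasurable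
    (.of_forall fun ω ↦ ?_)
  split_ifs with h
  · rw [norm_of_nonneg (by positivity), ← sq_abs]
    exact pow_le_pow_of_le_one (abs_nonneg _) h (by norm_num)
  · simpa using sq_nonneg (ξ i ω)

lemma beta3_nonneg : 0 ≤ beta3 ξ :=
  Finset.sum_nonneg fun _ _ ↦ integral_nonneg fun _ ↦ by positivity

lemma sum_neg_integral_xbar_le_beta2 [IsFiniteMeasure (ℙ : Measure Ω)]
    (hmeas : ∀ i, Measurable (ξ i)) (hL2 : ∀ i, MemLp (ξ i) 2) (hmean : ∀ i, ∫ ω, ξ i ω = 0) :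
    ∑ i, -∫ ω, xbar ξ i ω ≤ beta2 ξ := by
  refine Finset.sum_le_sum fun i _ ↦ ?_
  have hint := (hL2 i).integrable one_le_two
  have hint_bar := (memLp_xbar (hmeas i) (hL2 i)).integrable one_le_two
  calc -∫ ω, xbar ξ i ω = ∫ ω, (ξ i ω - xbar ξ i ω) := by
        rw [integral_sub hint hint_bar, hmean i, zero_sub]
    _ ≤ ∫ ω, if 1 < |ξ i ω| then ξ i ω ^ 2 else 0 :=
        integral_mono (hint.sub hint_bar) (integrable_ite_one_lt_abs_sq (hmeas i) (hL2 i))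
          (sub_xbar_le ξ i)

lemma sum_integral_sq_sub_beta2_le (hmeas : ∀ i, Measurable (ξ i)) (hL2 : ∀ i, MemLp (ξ i) 2) :
    (∑ i, ∫ ω, ξ i ω ^ 2) - beta2 ξ ≤ ∑ i, ∫ ω, xbar ξ i ω ^ 2 := by
  rw [sub_le_iff_le_add, beta2, ← Finset.sum_add_distrib]
  refine Finset.sum_le_sum fun i _ ↦ ?_
  have hsq := (memLp_xbar (hmeas i) (hL2 i)).integrable_sq
  have hlarge := integrable_ite_one_lt_abs_sq (hmeas i) (hL2 i)
  rw [← integral_add hsq hlarge]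
  exact integral_mono (hL2 i).integrable_sq (hsq.add hlarge) (sq_le_sq_xbar_add ξ i)

lemma sum_truncThirdMoment_xbar_le (hmeas : ∀ i, Measurable (ξ i)) (hL2 : ∀ i, MemLp (ξ i) 2) :
    ∑ i, truncThirdMoment (xbar ξ i) ℙ ≤ beta2 ξ + beta3 ξ := by
  rw [beta2, beta3, ← Finset.sum_add_distrib]
  refine Finset.sum_le_sum fun i _ ↦ ?_
  have hlarge := integrable_ite_one_lt_abs_sq (hmeas i) (hL2 i)
  have hsmall := integrable_ite_abs_le_one_abs_pow_three (hmeas i) (hL2 i)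
  rw [← integral_add hlarge hsmall]
  exact integral_mono (integrable_sq_mul_min_abs_one (memLp_xbar (hmeas i) (hL2 i)))
    (hlarge.add hsmall) (sq_xbar_mul_min_abs_one_le ξ i)

lemma isTruncatedArray_xbar [IsFiniteMeasure (ℙ : Measure Ω)] (hmeas : ∀ i, Measurable (ξ i))
    (hindep : iIndepFun ξ) (hL2 : ∀ i, MemLp (ξ i) 2) (hmean : ∀ i, ∫ ω, ξ i ω ≤ 0)
    (hvar : ∑ i, ∫ ω, ξ i ω ^ 2 ≤ 1) : IsTruncatedArray ℙ (xbar ξ) where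
  measurable i := measurable_xbar (hmeas i)
  indep := hindep.comp (fun _ x ↦ if x ≤ 1 then x else 0) fun _ ↦
    .ite measurableSet_Iic measurable_id measurable_const
  le_one := xbar_le_one ξ
  memLp_two i := memLp_xbar (hmeas i) (hL2 i)
  integral_nonpos i :=
    (integral_mono ((memLp_xbar (hmeas i) (hL2 i)).integrable one_le_two)
      ((hL2 i).integrable one_le_two) (xbar_le_self ξ i)).trans (hmean i)
  sum_integral_sq_le_one :=
    (Finset.sum_le_sum fun i _ ↦ integral_mono (memLp_xbar (hmeas i) (hL2 i)).integrable_sq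
      (hL2 i).integrable_sq fun ω ↦ sq_le_sq.2 (abs_xbar_le_abs ξ i ω)).trans hvar

lemma hasDefectLE_xbar [IsFiniteMeasure (ℙ : Measure Ω)] (hmeas : ∀ i, Measurable (ξ i))
    (hL2 : ∀ i, MemLp (ξ i) 2) (hmean : ∀ i, ∫ ω, ξ i ω = 0)
    (hvar : ∑ i, ∫ ω, ξ i ω ^ 2 = 1) : HasDefectLE ℙ (xbar ξ) (beta2 ξ + beta3 ξ) where
  mean := (sum_neg_integral_xbar_le_beta2 hmeas hL2 hmean).trans
    (le_add_of_nonneg_right beta3_nonneg)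
  third := sum_truncThirdMoment_xbar_le hmeas hL2
  var := by linarith [sum_integral_sq_sub_beta2_le hmeas hL2, beta3_nonneg (ξ := ξ)]

end Truncation

/-- Non-uniform bound for the truncated sum, inequality (4.14). -/
theorem truncated_sum_bound
    {Ω : Type*} [MeasureSpace Ω] [IsProbabilityMeasure (ℙ : Measure Ω)]
    {n : ℕ} (ξ : Fin n → Ω → ℝ)
    (hmeas : ∀ i, Measurable (ξ i))
    (hindep : iIndepFun ξ ℙ)
    (hL2 : ∀ i, MemLp (ξ i) 2 ℙ)
    (hmean : ∀ i, ∫ ω, ξ i ω = 0)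
    (hvar : ∑ i, ∫ ω, (ξ i ω) ^ 2 = 1)
    (z : ℝ) (hz : 2 < z) :
    |(ℙ {ω | Wbar ξ ω ≤ z}).toReal - Phi z|
      ≤ 7115 * Real.exp (-z / 2) * (beta2 ξ + beta3 ξ) := by
  have hX := isTruncatedArray_xbar hmeas hindep hL2 (fun i ↦ (hmean i).le) hvar.le
  have hδ := hasDefectLE_xbar hmeas hL2 hmean hvar
  have hδ_pos : 0 < beta2 ξ + beta3 ξ := hX.defect_pos hδ
  rcases le_total (beta2 ξ + beta3 ξ) (1 / 1000) with hsmall | hlarge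
  · calc |(ℙ {ω | Wbar ξ ω ≤ z}).toReal - Phi z|
        ≤ 472 * exp (-z / 2) * (beta2 ξ + beta3 ξ) :=
          hX.abs_measureReal_partialSum_le_sub_Phi_le hδ hsmall hz.le
      _ ≤ 7115 * exp (-z / 2) * (beta2 ξ + beta3 ξ) := by gcongr; norm_num
  · calc |(ℙ {ω | Wbar ξ ω ≤ z}).toReal - Phi z|
        ≤ exp (-z / 2) * 1 :=
          (hX.abs_measureReal_partialSum_le_sub_Phi_le_exp hz.le).trans_eq (mul_one _).symm
      _ ≤ exp (-z / 2) * (7115 * (beta2 ξ + beta3 ξ)) := by gcongr; linarith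
      _ = 7115 * exp (-z / 2) * (beta2 ξ + beta3 ξ) := by ring
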